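/- arXiv:math/0401252 — 3 statements merged into one kernel-verified Lean document; each statement's English description precedes it below -/
import Mathlib

section
/- For integers k ≥ 1 and n ≥ 0, the sum over partitions λ of length at most k of (∏_{i=1}^{k-1} (-q;q)_{λ_i - λ_{i+1}}) z^{|λ|} q^{Σ_i λ_i^2} [n choose λ]_{q^2} equals Σ_{r=0}^n (-1)^r z^{kr} q^{(k+1)r^2} [n choose r]_{q^2} ((-z;q)_{2n+1} / (z^2 q^{2r}; q^2)_{n+1}) (1 - z q^{2r}). -/
/-- Finite q-Pochhammer symbol `(x;q)_n = ∏_{k=0}^{n-1} (1 - x q^k)`. -/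
noncomputable def qPoch (x q : ℂ) (n : ℕ) : ℂ := ∏ k ∈ Finset.range n, (1 - x * q ^ k)

/-- Infinite q-Pochhammer symbol `(x;q)_∞ = ∏_{k≥0} (1 - x q^k)`. -/
noncomputable def qPochInf (x q : ℂ) : ℂ := ∏' k : ℕ, (1 - x * q ^ k)

/-- Gaussian binomial coefficient `[n choose k]_q`, via the q-Pascal recurrence. -/
def gb (q : ℂ) : ℕ → ℕ → ℂ
  | _, 0 => 1
  | 0, _ + 1 => 0
  | n + 1, k + 1 => gb q n k + q ^ (k + 1) * gb q n (k + 1)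

/-- Partitions with at most `k` (positive) parts: antitone sequences of naturals vanishing
from index `k` on; `l 0` is the largest part `λ_1`, and `l (k-1)` is `λ_k`. -/
def PartK (k : ℕ) : Type := {l : ℕ → ℕ // Antitone l ∧ ∀ i, k ≤ i → l i = 0}

/-- `|λ| = Σ_i λ_i`. -/
def wtK (k : ℕ) (l : PartK k) : ℕ := ∑ i ∈ Finset.range k, l.1 i

/-- `n_2(λ) = Σ_i λ_i^2`. -/
def n2K (k : ℕ) (l : PartK k) : ℕ := ∑ i ∈ Finset.range k, (l.1 i) ^ 2

/-- `n(λ) = Σ_i binom(λ_i, 2)`. -/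
def nK (k : ℕ) (l : PartK k) : ℕ := ∑ i ∈ Finset.range k, Nat.choose (l.1 i) 2

/-- `(x;q)_λ = ∏_{i=1}^{k} (x;q)_{λ_i - λ_{i+1}}` (with `λ_{k+1} = 0`). -/
noncomputable def pochK (x q : ℂ) (k : ℕ) (l : PartK k) : ℂ :=
  ∏ i ∈ Finset.range k, qPoch x q (l.1 i - l.1 (i + 1))


lemma qP_zero (x q : ℂ) : qPoch x q 0 = 1 := by simp [qPoch]

lemma qP_succ (x q : ℂ) (n : ℕ) : qPoch x q (n+1) = qPoch x q n * (1 - x * q^n) := by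
  simp [qPoch, Finset.prod_range_succ]

lemma qP_add (x q : ℂ) (a b : ℕ) :
    qPoch x q (a+b) = qPoch x q a * qPoch (x * q^a) q b := by
  unfold qPoch
  rw [Finset.prod_range_add]
  congr 1
  apply Finset.prod_congr rfl
  intro i _
  rw [pow_add]; ring

lemma qP_succ' (x q : ℂ) (n : ℕ) : qPoch x q (n+1) = (1 - x) * qPoch (x*q) q n := by
  rw [add_comm, qP_add]; simp [qPoch]

lemma qP_sq (x q : ℂ) (n : ℕ) :
    qPoch (x^2) (q^2) n = qPoch x q n * qPoch (-x) q n := by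
  unfold qPoch
  rw [← Finset.prod_mul_distrib]
  apply Finset.prod_congr rfl
  intro i _
  ring

lemma qP_ne (x q : ℂ) (n : ℕ) (h : ∀ i < n, x * q^i ≠ 1) : qPoch x q n ≠ 0 := by
  unfold qPoch
  rw [Finset.prod_ne_zero_iff]
  intro i hi
  exact sub_ne_zero.2 (h i (Finset.mem_range.1 hi)).symm

lemma pow_ne_one_of (q : ℂ) (hq : ‖q‖ < 1) (n : ℕ) : q^(n+1) ≠ 1 := by
  intro h
  have h1 : ‖q‖^(n+1) = 1 := by rw [← norm_pow, h, norm_one]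
  have h2 : ‖q‖^(n+1) < 1 := pow_lt_one₀ (norm_nonneg q) hq (by omega)
  linarith

lemma one_sub_ne (q : ℂ) (hq : ‖q‖ < 1) (n : ℕ) : 1 - q^(n+1) ≠ 0 :=
  sub_ne_zero.2 (pow_ne_one_of q hq n).symm

lemma qP_qq_ne (q : ℂ) (hq : ‖q‖ < 1) (n : ℕ) : qPoch q q n ≠ 0 := by
  apply qP_ne
  intro i _
  rw [← pow_succ']
  exact pow_ne_one_of q hq i

lemma norm_sq_lt (q : ℂ) (hq : ‖q‖ < 1) : ‖q^2‖ < 1 := by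
  rw [norm_pow]; exact pow_lt_one₀ (norm_nonneg q) hq (by omega)

lemma qP_q2_ne (q : ℂ) (hq : ‖q‖ < 1) (n : ℕ) : qPoch (q^2) (q^2) n ≠ 0 :=
  qP_qq_ne _ (norm_sq_lt q hq) n

lemma qP_mq_ne (q : ℂ) (hq : ‖q‖ < 1) (n : ℕ) : qPoch (-q) q n ≠ 0 := by
  have h := qP_q2_ne q hq n
  rw [qP_sq] at h
  exact right_ne_zero_of_mul h

lemma gb_zero (q : ℂ) (n : ℕ) : gb q n 0 = 1 := by cases n <;> simp [gb]

lemma gb_gt (q : ℂ) (n : ℕ) : ∀ k, n < k → gb q n k = 0 := by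
  induction n with
  | zero => intro k hk; cases k with
    | zero => omega
    | succ k => simp [gb]
  | succ n ih => intro k hk; cases k with
    | zero => omega
    | succ k => simp [gb, ih k (by omega), ih (k+1) (by omega)]

lemma gb_fac (q : ℂ) (j : ℕ) : ∀ i, gb q (i+j) j * qPoch q q i * qPoch q q j = qPoch q q (i+j) := by
  induction j with
  | zero => intro i; simp [gb_zero, qP_zero]
  | succ j ihj =>
    intro i
    induction i with
    | zero =>
      have := ihj 0
      simp only [zero_add, qP_zero] at this ⊢
      simp only [gb, gb_gt q j (j+1) (by omega)]
      rw [qP_succ]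
      linear_combination (1 - q * q^j) * this
    | succ i ihi =>
      have h1 := ihj (i+1)
      have e : i + 1 + (j+1) = (i+1+j) + 1 := by ring
      have e2 : i + (j+1) = i+1+j := by ring
      rw [e2] at ihi
      rw [e]
      simp only [gb]
      rw [qP_succ q q (i+1+j), qP_succ q q j]
      rw [qP_succ q q j] at ihi
      rw [qP_succ q q i] at h1 ⊢
      have e3 : q ^(i+1+j) = q^i * q * q^j := by ring
      rw [e3]
      linear_combination (1 - q * q^j) * h1 + q^(j+1) * (1 - q*q^i) * ihi

lemma gb_eq (q : ℂ) (hq : ‖q‖ < 1) (n j : ℕ) (h : j ≤ n) :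
    gb q n j = qPoch q q n / (qPoch q q (n-j) * qPoch q q j) := by
  obtain ⟨i, rfl⟩ := Nat.exists_eq_add_of_le' h
  rw [eq_div_iff (mul_ne_zero (qP_qq_ne q hq _) (qP_qq_ne q hq _)), Nat.add_sub_cancel,
    ← gb_fac]
  ring

/-- q-Chu-Vandermonde, polynomial form. -/
lemma chu (q A : ℂ) (M : ℕ) : ∀ c : ℂ,
    ∑ j ∈ Finset.range (M+1), gb q M j * ((∏ i ∈ Finset.range j, (c * q^i * (q^i - A))) *
      qPoch (c * q^j) q (M - j)) = qPoch (c*A) q M := by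
  induction M with
  | zero => intro c; simp [gb, qPoch]
  | succ M ih =>
    intro c
    rw [qP_succ' (c*A), show c * A * q = (c*q)*A by ring, ← ih (c*q), Finset.mul_sum,
      Finset.sum_range_succ']
    simp only [gb]
    simp only [add_mul, Finset.sum_add_distrib]
    have hs := Finset.sum_range_succ' (fun j => q^j * gb q M j *
      ((∏ i ∈ Finset.range j, (c * q^i * (q^i - A))) * qPoch (c * q^j) q (M +1 - j))) (M+1)
    rw [Finset.sum_range_succ, gb_gt q M (M+1) (by omega)] at hs
    simp only [gb_zero, pow_zero, one_mul, mul_zero, zero_mul, add_zero] at hs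
    simp only [one_mul, pow_zero]
    rw [add_assoc, ← hs, ← Finset.sum_add_distrib]
    apply Finset.sum_congr rfl
    intro j hj
    have hj' : j ≤ M := by simpa [Nat.lt_succ_iff] using hj
    have hp : ∏ i ∈ Finset.range j, (c * q * q^i * (q^i - A)) =
        q^j * ∏ i ∈ Finset.range j, (c * q^i * (q^i - A)) := by
      rw [Finset.prod_congr rfl (fun i _ => show c * q * q^i * (q^i - A) =
        q * (c * q^i * (q^i - A)) by ring), Finset.prod_mul_distrib]
      simp
    rw [hp, Finset.prod_range_succ, show M + 1 - (j+1) = M - j by omega,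
      show M + 1 - j = (M - j) + 1 by omega, qP_succ' (c * q^j),
      show c * q^j * q = c * q * q^j by ring, show c * q^(j+1) = c * q * q^j by ring]
    ring

lemma chu_div (q A c : ℂ) (M : ℕ) (h : qPoch c q M ≠ 0) :
    ∑ j ∈ Finset.range (M+1), gb q M j * (∏ i ∈ Finset.range j, (c * q^i * (q^i - A))) /
      qPoch c q j = qPoch (c*A) q M / qPoch c q M := by
  rw [← chu q A M c, Finset.sum_div]
  apply Finset.sum_congr rfl
  intro j hj
  have hj' : j ≤ M := by simpa [Nat.lt_succ_iff] using hj
  have e : qPoch c q M = qPoch c q j * qPoch (c*q^j) q (M-j) := by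
    rw [← qP_add]; congr 1; omega
  rw [e] at h ⊢
  have h1 := left_ne_zero_of_mul h
  have h2 := right_ne_zero_of_mul h
  field_simp

lemma prod_wq (w q : ℂ) (j : ℕ) :
    ∏ i ∈ Finset.range j, (w * q * q^i * q^i) = w^j * q^(j^2) := by
  induction j with
  | zero => simp
  | succ j ih => rw [Finset.prod_range_succ, ih]; ring

lemma bailey_sum (q w : ℂ) (hq : ‖q‖ < 1) (M : ℕ) (h : qPoch (w*q) q M ≠ 0) :
    ∑ j ∈ Finset.range (M+1), w^j * q^(j^2) /
      (qPoch q q (M-j) * qPoch q q j * qPoch (w*q) q j) =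
      1 / (qPoch q q M * qPoch (w*q) q M) := by
  have hc := chu_div q 0 (w*q) M h
  have hM := qP_qq_ne q hq M
  have e : qPoch (w * q * 0) q M = 1 := by simp [qPoch]
  rw [e] at hc
  rw [← div_div, div_right_comm, ← hc, Finset.sum_div]
  apply Finset.sum_congr rfl
  intro j hj
  have hj' : j ≤ M := by simpa [Nat.lt_succ_iff] using hj
  simp only [sub_zero]
  rw [prod_wq, gb_eq q hq M j hj']
  field_simp

lemma prod_mq (q : ℂ) (j : ℕ) : ∀ M, j ≤ M →
    (∏ i ∈ Finset.range j, (1 + q^(M-i))) * qPoch (-q) q (M-j) = qPoch (-q) q M := by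
  induction j with
  | zero => intro M _; simp
  | succ j ih =>
    intro M hM
    rw [← ih M (by omega), Finset.prod_range_succ, show M - j = (M - (j+1)) + 1 by omega,
      qP_succ]
    ring

lemma last_sum (q w : ℂ) (hq : ‖q‖ < 1) (M : ℕ) (h : qPoch (w*q) q M ≠ 0) :
    ∑ j ∈ Finset.range (M+1), w^j * q^(j^2) /
      (qPoch (q^2) (q^2) (M-j) * qPoch q q j * qPoch (w*q) q j) =
      qPoch (-w * q^(M+1)) q M / (qPoch (q^2) (q^2) M * qPoch (w*q) q M) := by
  have hc := chu_div q (-q^M) (w*q) M h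
  have hM := qP_q2_ne q hq M
  rw [show w * q * -q^M = -w*q^(M+1) by ring] at hc
  rw [mul_comm (qPoch (q^2) (q^2) M), ← div_div, ← hc, Finset.sum_div]
  apply Finset.sum_congr rfl
  intro j hj
  have hj' : j ≤ M := by simpa [Nat.lt_succ_iff] using hj
  have hp : ∏ i ∈ Finset.range j, (w * q * q^i * (q^i - -q^M)) =
      w^j * q^(j^2) * ∏ i ∈ Finset.range j, (1 + q^(M-i)) := by
    rw [← prod_wq, ← Finset.prod_mul_distrib]
    apply Finset.prod_congr rfl
    intro i hi
    have hi' := Finset.mem_range.1 hi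
    have : q^M = q^i * q^(M-i) := by rw [← pow_add]; congr 1; omega
    rw [this]; ring
  rw [hp, gb_eq q hq M j hj', qP_sq, qP_sq, ← prod_mq q j M hj']
  have h1 := qP_qq_ne q hq M
  have h3 := qP_mq_ne q hq M
  rw [← prod_mq q j M hj'] at h3
  have h4 := left_ne_zero_of_mul h3
  have h5 := right_ne_zero_of_mul h3
  field_simp

lemma init_step (q z : ℂ) (hq : ‖q‖ < 1) (r s : ℕ) (hz : qPoch z q (r+s+1+r+1) ≠ 0) :
    (-1)^r * q^(r^2) * qPoch (z^2) (q^2) r * (1 - z*q^(2*r)) * qPoch (q^2) (q^2) (r+s+1) /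
      (qPoch (q^2) (q^2) r * qPoch q q (s+1) * qPoch z q (r+s+1+r+1)) =
    (-1)^r * q^(r^2) * qPoch (z^2) (q^2) r * (1 - z*q^(2*r)) * qPoch (q^2) (q^2) (r+s) /
      (qPoch (q^2) (q^2) r * qPoch q q s * qPoch z q (r+s+r+1)) +
    (-(-1)^(r+1) * q^((r+1)^2) * qPoch (z^2) (q^2) (r+1) * qPoch (q^2) (q^2) (r+s) *
      (1 - q^(2*(r+1))) * q^s /
      (qPoch (q^2) (q^2) (r+1) * qPoch q q s * qPoch z q (r+s+(r+1)+1)) -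
     -(-1)^r * q^(r^2) * qPoch (z^2) (q^2) r * qPoch (q^2) (q^2) (r+s) *
      (1 - q^(2*r)) * q^(s+1) /
      (qPoch (q^2) (q^2) r * qPoch q q (s+1) * qPoch z q (r+s+r+1))) := by
  have h1 := qP_q2_ne q hq r
  have h2 := qP_qq_ne q hq s
  have h3 := one_sub_ne q hq s
  have h4 := one_sub_ne (q^2) (norm_sq_lt q hq) r
  rw [show r+s+1+r+1 = (r+s+r+1)+1 by ring, qP_succ z] at hz
  have h5 := left_ne_zero_of_mul hz
  have h6 := right_ne_zero_of_mul hz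
  rw [show r+s+1+r+1 = (r+s+r+1)+1 by ring, show r+s+(r+1)+1 = (r+s+r+1)+1 by ring,
    qP_succ z, qP_succ (q^2) (q^2) (r+s), qP_succ (z^2), qP_succ (q^2) (q^2) r, qP_succ q q s]
  have e1 : q^((r+1)^2) = q^(r^2) * (q^r)^2 * q := by ring
  have e2 : (q^2)^r = (q^r)^2 := by ring
  have e3 : q^(2*r) = (q^r)^2 := by ring
  have e4 : q^(2*(r+1)) = (q^r)^2 * q^2 := by ring
  have e5 : q^(r+s+r+1) = (q^r)^2 * q^s * q := by ring
  have e6 : (q^2)^(r+s) = (q^r)^2 * (q^s)^2 := by ring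
  have e7 : q^(s+1) = q^s * q := by ring
  have e8 : (q^2)^(r+1) = (q^r)^2 * q^2 := by ring
  have e9 : (-1:ℂ)^(r+1) = -(-1)^r := by ring
  rw [e8] at h4
  rw [e7] at h3
  rw [e5] at h6
  rw [e1, e2, e3, e4, e5, e6, e7, e9]
  generalize qPoch (q^2) (q^2) r = P1 at *
  generalize qPoch q q s = P2 at *
  generalize qPoch z q (r+s+r+1) = P3 at *
  generalize qPoch (z^2) (q^2) r = P4 at *
  generalize qPoch (q^2) (q^2) (r+s) = P5 at *
  generalize q^(r^2) = P6 at *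
  generalize q^r = x at *
  generalize q^s = y at *
  generalize (-1:ℂ)^r = e at *
  rw [show 1 - q^2 * x^2 = 1 - x^2 * q^2 by ring, show 1 - q * y = 1 - y * q by ring]
  obtain ⟨a, ha⟩ : ∃ a, a = 1 - x^2 * q^2 := ⟨_, rfl⟩
  obtain ⟨b, hb⟩ : ∃ b, b = 1 - y * q := ⟨_, rfl⟩
  obtain ⟨c, hc⟩ : ∃ c, c = 1 - z * (x^2 * y * q) := ⟨_, rfl⟩
  rw [← ha] at h4 ⊢
  rw [← hb] at h3 ⊢
  rw [← hc] at h6 ⊢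
  field_simp
  rw [hb, hc]
  ring

lemma init_sum (q z : ℂ) (hq : ‖q‖ < 1) (N : ℕ) : qPoch z q (2*N+1) ≠ 0 →
    ∑ r ∈ Finset.range (N+1),
    (-1)^r * q^(r^2) * qPoch (z^2) (q^2) r * (1 - z*q^(2*r)) * qPoch (q^2) (q^2) N /
      (qPoch (q^2) (q^2) r * qPoch q q (N-r) * qPoch z q (N+r+1)) = 1 := by
  induction N with
  | zero =>
    intro h
    simp [qP_succ, qP_zero] at h ⊢
    exact h
  | succ N ih =>
    intro h
    have hne : ∀ m, m ≤ 2*(N+1)+1 → qPoch z q m ≠ 0 := by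
      intro m hm
      rw [show 2*(N+1)+1 = m + (2*(N+1)+1-m) by omega, qP_add] at h
      exact left_ne_zero_of_mul h
    have ih' := ih (hne _ (by omega))
    let G : ℕ → ℂ := fun r => -(-1)^r * q^(r^2) * qPoch (z^2) (q^2) r * qPoch (q^2) (q^2) N *
      (1 - q^(2*r)) * q^(N+1-r) /
      (qPoch (q^2) (q^2) r * qPoch q q (N+1-r) * qPoch z q (N+r+1))
    rw [Finset.sum_range_succ, Finset.sum_congr rfl (g := fun r =>
      (-1)^r * q^(r^2) * qPoch (z^2) (q^2) r * (1 - z*q^(2*r)) * qPoch (q^2) (q^2) N /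
      (qPoch (q^2) (q^2) r * qPoch q q (N-r) * qPoch z q (N+r+1)) + (G (r+1) - G r)),
      Finset.sum_add_distrib, Finset.sum_range_sub, ih']
    · have h0 : G 0 = 0 := by simp [G]
      rw [h0]
      have h1 := hne (N+1+(N+1)+1) (by omega)
      have h4 := one_sub_ne (q^2) (norm_sq_lt q hq) N
      have h5 := qP_q2_ne q hq N
      simp only [G, Nat.sub_self, qP_zero]
      rw [show N+1+(N+1)+1 = (N+(N+1)+1)+1 by ring, qP_succ z q (N+(N+1)+1)] at h1 ⊢
      have h2 := left_ne_zero_of_mul h1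
      have h3 := right_ne_zero_of_mul h1
      have e : 1 - z*q^(2*(N+1)) = 1 - z*q^(N+(N+1)+1) := by congr 3; ring
      have e2 : 1 - q^(2*(N+1)) = 1 - (q^2)^(N+1) := by rw [pow_mul]
      have e3 : (1 - q^2 * (q^2)^N) = 1 - (q^2)^(N+1) := by ring
      rw [e, e2, qP_succ (q^2), e3]
      field_simp
      ring
    · intro r hr
      have hr' : r ≤ N := by simpa [Nat.lt_succ_iff] using hr
      obtain ⟨s, rfl⟩ := Nat.exists_eq_add_of_le hr'
      have := init_step q z hq r s (hne _ (by omega))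
      simp only [G, show r+s+1-r = s+1 by omega, show r+s-r = s by omega,
        show r+s+1-(r+1) = s by omega]
      exact this

lemma double_sum (q z : ℂ) (D c : ℕ → ℂ) (N : ℕ) :
    ∑ m ∈ Finset.range (N+1), z^m * q^(m^2) / D (N-m) *
      ∑ r ∈ Finset.range (m+1), c r / (qPoch q q (m-r) * qPoch z q (m+r+1)) =
    ∑ r ∈ Finset.range (N+1), c r * z^r * q^(r^2) / qPoch z q (2*r+1) *
      ∑ j ∈ Finset.range (N-r+1), (z*q^(2*r))^j * q^(j^2) /
        (D (N-r-j) * qPoch q q j * qPoch (z*q^(2*r)*q) q j) := by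
  simp only [Finset.mul_sum]
  simp only [Finset.range_eq_Ico]
  rw [← Finset.sum_Ico_Ico_comm]
  apply Finset.sum_congr rfl
  intro r hr
  have hr' : r ≤ N := by simpa [Nat.lt_succ_iff] using hr
  rw [Finset.sum_Ico_eq_sum_range, ← Finset.range_eq_Ico, show N + 1 - r = N - r + 1 by omega]
  apply Finset.sum_congr rfl
  intro j hj
  rw [show r + j + r + 1 = (2*r+1) + j by ring, qP_add, show r + j - r = j by omega,
    show N - (r+j) = N - r - j by omega, show z * q^(2*r+1) = z*q^(2*r)*q by ring]
  simp only [div_eq_mul_inv, mul_inv]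
  ring

/-- The iterated chain sum. -/
noncomputable def BB (q z : ℂ) : ℕ → ℕ → ℂ
  | 0, N => 1 / qPoch (q^2) (q^2) N
  | k+1, N => ∑ m ∈ Finset.range (N+1), z^m * q^(m^2) / qPoch q q (N-m) * BB q z k m

noncomputable def al (q z : ℂ) (r : ℕ) : ℂ :=
  (-1)^r * q^(r^2) * qPoch (z^2) (q^2) r * (1 - z*q^(2*r)) / qPoch (q^2) (q^2) r

lemma qP_ne_of_le (z q : ℂ) (n m : ℕ) (h : qPoch z q n ≠ 0) (hm : m ≤ n) : qPoch z q m ≠ 0 := by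
  rw [show n = m + (n-m) by omega, qP_add] at h
  exact left_ne_zero_of_mul h

lemma BB_eq (q z : ℂ) (hq : ‖q‖ < 1) (k : ℕ) : ∀ N, qPoch z q (2*N+1) ≠ 0 →
    BB q z k N = ∑ r ∈ Finset.range (N+1), (z^(k*r) * q^(k*r^2) * al q z r) /
      (qPoch q q (N-r) * qPoch z q (N+r+1)) := by
  induction k with
  | zero =>
    intro N h
    simp only [BB]
    rw [← init_sum q z hq N h, Finset.sum_div]
    apply Finset.sum_congr rfl
    intro r _
    have := qP_q2_ne q hq N
    simp only [al, zero_mul, pow_zero, one_mul]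
    field_simp
  | succ k ih =>
    intro N h
    simp only [BB]
    rw [Finset.sum_congr rfl (fun m hm => by
      rw [ih m (qP_ne_of_le _ _ _ _ h (by have := Finset.mem_range.1 hm; omega))]),
      double_sum]
    apply Finset.sum_congr rfl
    intro r hr
    have hr' : r ≤ N := by simpa [Nat.lt_succ_iff] using hr
    have hd : qPoch z q (N+r+1) = qPoch z q (2*r+1) * qPoch (z*q^(2*r)*q) q (N-r) := by
      rw [show N+r+1 = (2*r+1) + (N-r) by omega, qP_add]
      congr 2; ring
    have h1 := qP_ne_of_le _ _ _ (N+r+1) h (by omega)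
    rw [hd] at h1
    rw [bailey_sum q _ hq _ (right_ne_zero_of_mul h1), hd]
    simp only [div_eq_mul_inv, mul_inv]
    ring

lemma final_sum (q z : ℂ) (hq : ‖q‖ < 1) (K n : ℕ)
    (hz : ∀ j : ℕ, j ≤ 2 * n → z ^ 2 * q ^ (2 * j) ≠ 1) :
    ∑ m ∈ Finset.range (n+1), z^m * q^(m^2) * (qPoch (q^2) (q^2) n /
      qPoch (q^2) (q^2) (n-m)) * BB q z K m =
    ∑ r ∈ Finset.range (n + 1),
          (-1) ^ r * z ^ ((K+1) * r) * q ^ ((K+1 + 1) * r ^ 2) * gb (q ^ 2) n r *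
            (qPoch (-z) q (2 * n + 1) / qPoch (z ^ 2 * q ^ (2 * r)) (q ^ 2) (n + 1)) *
            (1 - z * q ^ (2 * r)) := by
  have hz2 : qPoch (z^2) (q^2) (2*n+1) ≠ 0 := by
    apply qP_ne
    intro i hi
    rw [← pow_mul]
    exact hz i (by omega)
  have hz1 : qPoch z q (2*n+1) ≠ 0 := by
    rw [qP_sq] at hz2
    exact left_ne_zero_of_mul hz2
  have e : ∀ m ∈ Finset.range (n+1), z^m * q^(m^2) * (qPoch (q^2) (q^2) n /
      qPoch (q^2) (q^2) (n-m)) * BB q z K m = qPoch (q^2) (q^2) n *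
      (z^m * q^(m^2) / qPoch (q^2) (q^2) (n-m) *
      ∑ r ∈ Finset.range (m+1), (z^(K*r) * q^(K*r^2) * al q z r) /
      (qPoch q q (m-r) * qPoch z q (m+r+1))) := by
    intro m hm
    rw [BB_eq q z hq K m (qP_ne_of_le _ _ _ _ hz1
      (by have := Finset.mem_range.1 hm; omega))]
    ring
  rw [Finset.sum_congr rfl e, ← Finset.mul_sum,
    double_sum q z (fun m => qPoch (q^2) (q^2) m) (fun r => z^(K*r) * q^(K*r^2) * al q z r) n,
    Finset.mul_sum]
  apply Finset.sum_congr rfl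
  intro r hr
  have hr' : r ≤ n := by simpa [Nat.lt_succ_iff] using hr
  have hd : qPoch z q (n+r+1) = qPoch z q (2*r+1) * qPoch (z*q^(2*r)*q) q (n-r) := by
    rw [show n+r+1 = (2*r+1) + (n-r) by omega, qP_add]
    congr 2; ring
  have h1 := qP_ne_of_le _ _ _ (n+r+1) hz1 (by omega)
  have h1' := h1
  rw [hd] at h1
  have h2 := left_ne_zero_of_mul h1
  have h3 := right_ne_zero_of_mul h1
  rw [last_sum q _ hq _ h3, gb_eq _ (norm_sq_lt q hq) n r hr']
  have h4 := qP_ne_of_le _ _ _ (r+(n+1)) hz2 (by omega)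
  have h4' := h4
  rw [qP_add, ← pow_mul] at h4
  have h5 := left_ne_zero_of_mul h4
  have h6 := right_ne_zero_of_mul h4
  have h7 := qP_q2_ne q hq r
  have h8 := qP_q2_ne q hq (n-r)
  have key : qPoch (z^2) (q^2) r * qPoch (-(z*q^(2*r)) * q^(n-r+1)) q (n-r) *
      qPoch (z^2*q^(2*r)) (q^2) (n+1) = qPoch (-z) q (2*n+1) *
      (qPoch z q (2*r+1) * qPoch (z*q^(2*r)*q) q (n-r)) := by
    rw [← hd, show 2*n+1 = (n+r+1) + (n-r) by omega, qP_add (-z)]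
    have : qPoch (z^2) (q^2) r * qPoch (z^2*q^(2*r)) (q^2) (n+1) =
        qPoch z q (n+r+1) * qPoch (-z) q (n+r+1) := by
      rw [← qP_sq, show n+r+1 = r+(n+1) by ring, qP_add (z^2), ← pow_mul]
    have e3 : -(z*q^(2*r)) * q^(n-r+1) = -z * q^(n+r+1) := by
      rw [show n+r+1 = 2*r+(n-r+1) by omega, pow_add]; ring
    rw [e3]
    linear_combination qPoch (-z * q^(n+r+1)) q (n-r) * this
  have key2 : qPoch (-z) q (2*n+1) / qPoch (z^2*q^(2*r)) (q^2) (n+1) =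
      qPoch (z^2) (q^2) r * qPoch (-(z*q^(2*r)) * q^(n-r+1)) q (n-r) /
      (qPoch z q (2*r+1) * qPoch (z*q^(2*r)*q) q (n-r)) := by
    rw [div_eq_div_iff h6 h1, key]
  rw [key2]
  simp only [al, div_eq_mul_inv, mul_inv]
  ring

/-- Prepend a part (truncating the tail so that the result is always a partition). -/
def consK (k m : ℕ) (mu : PartK k) : PartK (k+1) :=
  ⟨fun i => Nat.casesOn i m (fun j => min m (mu.1 j)), by
    constructor
    · apply antitone_nat_of_succ_le
      intro i
      cases i with
      | zero => exact min_le_left _ _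
      | succ i => exact min_le_min le_rfl (mu.2.1 (Nat.le_succ i))
    · intro i hi
      cases i with
      | zero => omega
      | succ i =>
        show min m (mu.1 i) = 0
        rw [mu.2.2 i (by omega)]; simp⟩

lemma consK_zero (k m : ℕ) (mu : PartK k) : (consK k m mu).1 0 = m := rfl

lemma consK_succ (k m : ℕ) (mu : PartK k) (h : mu.1 0 ≤ m) (i : ℕ) :
    (consK k m mu).1 (i+1) = mu.1 i := by
  show min m (mu.1 i) = _
  exact min_eq_right ((mu.2.1 (Nat.zero_le i)).trans h)

def tailK (k : ℕ) (l : PartK (k+1)) : PartK k :=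
  ⟨fun i => l.1 (i+1), fun _ _ h => l.2.1 (Nat.succ_le_succ h), fun i hi => l.2.2 (i+1) (by omega)⟩

def partEquiv (k : ℕ) : PartK (k+1) ≃ {p : ℕ × PartK k // p.2.1 0 ≤ p.1} where
  toFun l := ⟨(l.1 0, tailK k l), l.2.1 (Nat.zero_le 1)⟩
  invFun p := consK k p.1.1 p.1.2
  left_inv l := by
    apply Subtype.ext
    funext i
    cases i with
    | zero => rfl
    | succ i => exact consK_succ k _ (tailK k l) (l.2.1 (Nat.zero_le 1)) i
  right_inv p := by
    apply Subtype.ext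
    apply Prod.ext
    · rfl
    · apply Subtype.ext
      funext i
      exact consK_succ k _ _ p.2 i

lemma partK_finite (k n : ℕ) : {l : PartK k | l.1 0 ≤ n}.Finite := by
  rw [← Set.finite_coe_iff]
  apply Finite.of_injective
    (fun (l : {l : PartK k | l.1 0 ≤ n}) (i : Fin k) =>
      (⟨l.1.1 i, Nat.lt_succ_of_le ((l.1.2.1 (Nat.zero_le _)).trans l.2)⟩ : Fin (n+1)))
  intro a b hab
  apply Subtype.ext
  apply Subtype.ext
  funext i
  by_cases hi : i < k
  · have := congrFun hab ⟨i, hi⟩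
    simpa using this
  · rw [a.1.2.2 i (by omega), b.1.2.2 i (by omega)]

lemma tsum_partK (k n : ℕ) (f : PartK (k+1) → ℂ) (hf : ∀ l, n < l.1 0 → f l = 0) :
    ∑' l, f l = ∑ m ∈ Finset.range (n+1), ∑' mu : PartK k,
      if mu.1 0 ≤ m then f (consK k m mu) else 0 := by
  classical
  rw [← (partEquiv k).symm.tsum_eq f]
  have h1 : ∑' p : {p : ℕ × PartK k // p.2.1 0 ≤ p.1}, f ((partEquiv k).symm p) =
      ∑' p : ℕ × PartK k, if p.2.1 0 ≤ p.1 then f (consK k p.1 p.2) else 0 := by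
    have := tsum_subtype {p : ℕ × PartK k | p.2.1 0 ≤ p.1} (fun p => f (consK k p.1 p.2))
    simp only [Set.indicator_apply, Set.mem_ofPred_eq] at this
    exact this
  rw [h1]
  have hfin : ({m : ℕ | m ≤ n} ×ˢ {l : PartK k | l.1 0 ≤ n}).Finite :=
    (Set.finite_le_nat n).prod (partK_finite k n)
  have hs : Summable (fun p : ℕ × PartK k =>
      if p.2.1 0 ≤ p.1 then f (consK k p.1 p.2) else 0) := by
    apply summable_of_ne_finset_zero (s := hfin.toFinset)
    intro p hp
    rw [Set.Finite.mem_toFinset] at hp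
    split_ifs with h
    · apply hf
      rw [consK_zero]
      by_contra hc
      exact hp ⟨not_lt.1 hc, h.trans (not_lt.1 hc)⟩
    · rfl
  rw [hs.tsum_prod]
  apply tsum_eq_sum
  intro m hm
  have hm' : n < m := by simpa using hm
  have : ∀ mu : PartK k, (if mu.1 0 ≤ m then f (consK k m mu) else 0) = 0 := by
    intro mu
    rw [hf _ (by rw [consK_zero]; exact hm')]; simp
  simp [this]

/-- The sequence `N, λ_1, λ_2, ...`. -/
def extK (k N : ℕ) (l : PartK k) (i : ℕ) : ℕ := Nat.casesOn i N (fun j => l.1 j)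

lemma extK_cons (k N m : ℕ) (mu : PartK k) (h : mu.1 0 ≤ m) (i : ℕ) :
    extK (k+1) N (consK k m mu) (i+1) = extK k m mu i := by
  cases i with
  | zero => rfl
  | succ i => exact consK_succ k m mu h i

lemma cons_ext (k m : ℕ) (mu : PartK k) (h : mu.1 0 ≤ m) (i : ℕ) :
    (consK k m mu).1 i = extK k m mu i := by
  cases i with
  | zero => rfl
  | succ i => exact consK_succ k m mu h i

noncomputable def PP (q z : ℂ) (k N : ℕ) (l : PartK k) : ℂ :=
  z ^ wtK k l * q ^ n2K k l *
    ((∏ i ∈ Finset.range k, qPoch q q (extK k N l i - extK k N l (i+1)))⁻¹ *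
      (qPoch (q^2) (q^2) (extK k N l k))⁻¹)

lemma wt_cons (k m : ℕ) (mu : PartK k) (h : mu.1 0 ≤ m) :
    wtK (k+1) (consK k m mu) = m + wtK k mu := by
  unfold wtK
  rw [Finset.sum_range_succ', consK_zero, add_comm]
  simp only [consK_succ k m mu h]

lemma n2_cons (k m : ℕ) (mu : PartK k) (h : mu.1 0 ≤ m) :
    n2K (k+1) (consK k m mu) = m^2 + n2K k mu := by
  unfold n2K
  rw [Finset.sum_range_succ', consK_zero, add_comm]
  simp only [consK_succ k m mu h]

lemma PP_cons (q z : ℂ) (k N m : ℕ) (mu : PartK k) (h : mu.1 0 ≤ m) :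
    PP q z (k+1) N (consK k m mu) = z^m * q^(m^2) / qPoch q q (N-m) * PP q z k m mu := by
  unfold PP
  rw [wt_cons k m mu h, n2_cons k m mu h, Finset.prod_range_succ']
  simp only [extK_cons k N m mu h]
  have e0 : extK (k+1) N (consK k m mu) 0 = N := rfl
  have e1 : extK k m mu 0 = m := rfl
  rw [e0, e1, pow_add, pow_add, mul_inv, div_eq_mul_inv]
  ring

lemma tsum_PP (q z : ℂ) (k : ℕ) : ∀ N, ∑' l : PartK k, (if l.1 0 ≤ N then PP q z k N l else 0) =
    BB q z k N := by
  induction k with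
  | zero =>
    intro N
    have l0 : PartK 0 := ⟨fun _ => 0, fun _ _ _ => le_rfl, fun _ _ => rfl⟩
    have hu : ∀ a b : PartK 0, a = b := by
      intro a b
      apply Subtype.ext
      funext i
      rw [a.2.2 i (Nat.zero_le i), b.2.2 i (Nat.zero_le i)]
    rw [tsum_eq_single l0 (fun b hb => absurd (hu b l0) hb)]
    rw [if_pos (by rw [l0.2.2 0 le_rfl]; exact Nat.zero_le _)]
    simp [PP, BB, wtK, n2K, extK]
  | succ k ih =>
    intro N
    rw [tsum_partK k N _ (fun l hl => if_neg (not_le.2 hl))]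
    simp only [BB]
    apply Finset.sum_congr rfl
    intro m hm
    have hm' : m ≤ N := by simpa [Nat.lt_succ_iff] using hm
    rw [← ih m, ← tsum_mul_left]
    apply tsum_congr
    intro mu
    rw [consK_zero, if_pos hm']
    split_ifs with h
    · exact PP_cons q z k N m mu h
    · simp


/-- Corollary 1 (finite Kawanaka-type identity): for `k ≥ 1`, `n ≥ 0`,
`Σ_{l(λ)≤k} (∏_{i=1}^{k-1}(-q;q)_{λ_i-λ_{i+1}}) z^{|λ|} q^{n_2(λ)} [n choose λ]_{q^2}
 = Σ_{r=0}^n (-1)^r z^{kr} q^{(k+1)r^2} [n choose r]_{q^2}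
     ((-z;q)_{2n+1}/(z^2 q^{2r};q^2)_{n+1}) (1 - z q^{2r})`. -/
theorem kawanaka_finite (k : ℕ) (hk : 1 ≤ k) (n : ℕ) (q z : ℂ) (hq : ‖q‖ < 1)
    (hz : ∀ j : ℕ, j ≤ 2 * n → z ^ 2 * q ^ (2 * j) ≠ 1) :
    ∑' lam : PartK k,
        (∏ i ∈ Finset.range (k - 1), qPoch (-q) q (lam.1 i - lam.1 (i + 1))) *
          z ^ wtK k lam * q ^ n2K k lam *
          (if lam.1 0 ≤ n then
            qPoch (q ^ 2) (q ^ 2) n /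
              (qPoch (q ^ 2) (q ^ 2) (n - lam.1 0) * pochK (q ^ 2) (q ^ 2) k lam)
          else 0)
      = ∑ r ∈ Finset.range (n + 1),
          (-1) ^ r * z ^ (k * r) * q ^ ((k + 1) * r ^ 2) * gb (q ^ 2) n r *
            (qPoch (-z) q (2 * n + 1) / qPoch (z ^ 2 * q ^ (2 * r)) (q ^ 2) (n + 1)) *
            (1 - z * q ^ (2 * r)) := by
  obtain ⟨K, rfl⟩ : ∃ K, k = K + 1 := ⟨k - 1, by omega⟩
  rw [← final_sum q z hq K n hz, tsum_partK K n]
  · apply Finset.sum_congr rfl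
    intro m hm
    have hm' : m ≤ n := by simpa [Nat.lt_succ_iff] using hm
    rw [← tsum_PP q z K m, ← tsum_mul_left]
    apply tsum_congr
    intro mu
    rw [consK_zero, if_pos hm']
    split_ifs with h
    · rw [wt_cons K m mu h, n2_cons K m mu h]
      unfold PP pochK
      have hlast : (consK K m mu).1 (K + 1) = 0 := (consK K m mu).2.2 (K + 1) le_rfl
      rw [Finset.prod_range_succ, hlast, Nat.sub_zero]
      simp only [cons_ext K m mu h, Nat.add_sub_cancel]
      rw [Finset.prod_congr rfl (fun i _ => qP_sq q q
        (extK K m mu i - extK K m mu (i + 1))), Finset.prod_mul_distrib]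
      have hne : ∏ i ∈ Finset.range K, qPoch (-q) q (extK K m mu i - extK K m mu (i + 1)) ≠ 0 :=
        Finset.prod_ne_zero_iff.2 (fun i _ => qP_mq_ne q hq _)
      generalize ∏ i ∈ Finset.range K, qPoch (-q) q (extK K m mu i - extK K m mu (i + 1)) = X at *
      simp only [div_eq_mul_inv, mul_inv, pow_add]
      have hX : X * X⁻¹ = 1 := mul_inv_cancel₀ hne
      generalize X⁻¹ = Y at *
      generalize (∏ i ∈ Finset.range K, qPoch q q (extK K m mu i - extK K m mu (i + 1)))⁻¹ = U
      generalize (qPoch (q ^ 2) (q ^ 2) (extK K m mu K))⁻¹ = V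
      generalize (qPoch (q ^ 2) (q ^ 2) (n - m))⁻¹ = W
      linear_combination (z ^ m * z ^ wtK K mu * (q ^ m ^ 2 * q ^ n2K K mu) *
        (qPoch (q ^ 2) (q ^ 2) n * (W * (U * V)))) * hX
    · simp
  · intro l hl
    rw [if_neg (not_le.2 hl), mul_zero]
end

section
/- For each k ≥ 1 and |q| < 1: Σ_{λ: l(λ) ≤ k} q^{|λ| + Σ_i λ_i^2} / ((-q;q)_{λ_k} (q;q)_λ) = (q^{2k+2}, q^{2k+1}, q; q^{2k+2})_∞ / (q;q)_∞. -/
namespace AG15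

open Finset

/-- inverse of the Pochhammer symbol (q;q)_n -/
noncomputable def ci (q : ℂ) (n : ℕ) : ℂ := (qPoch q q n)⁻¹

lemma one_sub_ne {q : ℂ} (hq : ‖q‖ < 1) (n : ℕ) : 1 - q ^ (n + 1) ≠ 0 := by
  intro h
  have h1 : q ^ (n + 1) = 1 := (sub_eq_zero.mp h).symm
  have h2 : ‖q‖ ^ (n + 1) = 1 := by rw [← norm_pow, h1, norm_one]
  have h3 : ‖q‖ ^ (n + 1) < 1 := pow_lt_one₀ (norm_nonneg q) hq (Nat.succ_ne_zero n)
  linarith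

lemma poch_ne {q : ℂ} (hq : ‖q‖ < 1) (n : ℕ) : qPoch q q n ≠ 0 := by
  unfold qPoch
  rw [prod_ne_zero_iff]
  intro k _
  have := one_sub_ne hq k
  rwa [pow_succ'] at this

lemma ci_ne {q : ℂ} (hq : ‖q‖ < 1) (n : ℕ) : ci q n ≠ 0 := inv_ne_zero (poch_ne hq n)

lemma ci_zero (q : ℂ) : ci q 0 = 1 := by simp [ci, qPoch]

lemma ci_succ {q : ℂ} (hq : ‖q‖ < 1) (n : ℕ) : ci q n = ci q (n + 1) * (1 - q ^ (n + 1)) := by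
  unfold ci
  have h1 := one_sub_ne hq n
  have h2 := poch_ne hq n
  have h3 : qPoch q q (n + 1) = qPoch q q n * (1 - q ^ (n + 1)) := by
    simp [qPoch, prod_range_succ, pow_succ']
  rw [h3]
  field_simp

/-- Gaussian binomials by the Pascal recursion. -/
def gb (q : ℂ) : ℕ → ℕ → ℂ
  | _, 0 => 1
  | 0, (_ + 1) => 0
  | (M + 1), (m + 1) => gb q M (m + 1) + q ^ (M - m) * gb q M m

lemma gb_zero_right (q : ℂ) (M : ℕ) : gb q M 0 = 1 := by cases M <;> simp [gb]

lemma gb_of_lt (q : ℂ) (M m : ℕ) (h : M < m) : gb q M m = 0 := by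
  induction M generalizing m with
  | zero => obtain ⟨m, rfl⟩ : ∃ m', m = m' + 1 := ⟨m - 1, by omega⟩; simp [gb]
  | succ M ih =>
    obtain ⟨m, rfl⟩ : ∃ m', m = m' + 1 := ⟨m - 1, by omega⟩
    rw [gb, ih _ (by omega), ih _ (by omega)]; simp

lemma gb_eq {q : ℂ} (hq : ‖q‖ < 1) (m d : ℕ) :
    gb q (m + d) m * ci q (m + d) = ci q m * ci q d := by
  suffices H : ∀ M m d, m + d = M → gb q M m * ci q M = ci q m * ci q d from H _ m d rfl
  intro M
  induction M with
  | zero =>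
    intro m d h
    obtain ⟨rfl, rfl⟩ : m = 0 ∧ d = 0 := by omega
    simp [gb, ci_zero]
  | succ M ih =>
    intro m d h
    cases m with
    | zero =>
      obtain rfl : d = M + 1 := by omega
      simp [gb_zero_right, ci_zero]
    | succ m =>
      have hM := ci_succ hq M
      have hn := one_sub_ne hq M
      have h2 := ih m d (by omega)
      have hs : M - m = d := by omega
      rw [gb, hs]
      apply mul_right_cancel₀ hn
      cases d with
      | zero =>
        obtain rfl : m = M := by omega
        rw [gb_of_lt _ _ _ (Nat.lt_succ_self m)]
        have e1 := ci_succ hq m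
        rw [e1] at h2
        rw [show q ^ 0 = 1 from pow_zero q]
        linear_combination h2
      | succ d =>
        have h1 := ih (m + 1) d (by omega)
        rw [hM] at h1 h2
        rw [ci_succ hq d] at h1
        rw [ci_succ hq m] at h2
        obtain rfl : M = m + 1 + d := by omega
        linear_combination h1 + q ^ (d + 1) * h2

lemma gb_sum (q : ℂ) (M : ℕ) (f : ℕ → ℂ) :
    ∑ m ∈ range (M + 2), gb q (M + 1) m * f m
      = ∑ m ∈ range (M + 1), gb q M m * f m
        + ∑ m ∈ range (M + 1), gb q M m * (q ^ (M - m) * f (m + 1)) := by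
  rw [sum_range_succ']
  have h : ∑ m ∈ range (M + 1), gb q M m * f m
      = ∑ m ∈ range (M + 1), gb q M (m + 1) * f (m + 1) + f 0 := by
    have := sum_range_succ' (fun m => gb q M m * f m) (M + 1)
    rw [sum_range_succ, gb_of_lt _ _ _ (Nat.lt_succ_self M)] at this
    simpa [gb_zero_right] using this
  rw [h, gb_zero_right]
  simp only [gb, add_mul, sum_add_distrib]
  have : ∀ m, q ^ (M - m) * gb q M m * f (m + 1) = gb q M m * (q ^ (M - m) * f (m + 1)) := by
    intro m; ring
  simp only [this]
  ring

lemma vand0 {q : ℂ} (hq : ‖q‖ < 1) (M c : ℕ) :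
    ∑ m ∈ range (M + 1), gb q M m * (q ^ (m ^ 2 + c * m) * ci q (m + c)) = ci q (M + c) := by
  induction M generalizing c with
  | zero => simp [gb]
  | succ M ih =>
    rw [gb_sum, ih c]
    have : ∀ m ∈ range (M + 1), gb q M m * (q ^ (M - m) *
          (q ^ ((m + 1) ^ 2 + c * (m + 1)) * ci q (m + 1 + c)))
        = q ^ (M + 1 + c) * (gb q M m * (q ^ (m ^ 2 + (c + 1) * m) * ci q (m + (c + 1)))) := by
      intro m hm
      have hm' : m ≤ M := by simpa [Nat.lt_succ_iff] using hm
      obtain ⟨d, rfl⟩ := Nat.exists_eq_add_of_le hm'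
      rw [show m + d - m = d by omega, show m + 1 + c = m + (c + 1) by ring]
      ring
    rw [sum_congr rfl this, ← mul_sum, ih (c + 1), ci_succ hq (M + c),
      show M + (c + 1) = M + c + 1 by ring, show M + 1 + c = M + c + 1 by ring]
    ring

lemma vand {q : ℂ} (hq : ‖q‖ < 1) (M c : ℕ) :
    ∑ m ∈ range (M + 1), q ^ (m ^ 2 + c * m) * ci q (M - m) * ci q m * ci q (m + c)
      = ci q M * ci q (M + c) := by
  rw [← vand0 hq M c, mul_sum]
  apply sum_congr rfl
  intro m hm
  have hm' : m ≤ M := by simpa [Nat.lt_succ_iff] using hm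
  obtain ⟨d, rfl⟩ := Nat.exists_eq_add_of_le hm'
  rw [show m + d - m = d by omega]
  linear_combination (-q ^ (m ^ 2 + c * m) * ci q (m + c)) * gb_eq hq m d

/-- Bailey-lemma step. -/
lemma bailey_step {q : ℂ} (hq : ‖q‖ < 1) (α : ℕ → ℂ) (N : ℕ) :
    ∑ n ∈ range (N + 1), ci q (N - n) * q ^ (n ^ 2 + n) *
        ∑ r ∈ range (n + 1), α r * ci q (n - r) * ci q (n + r + 1)
      = ∑ r ∈ range (N + 1), (q ^ (r ^ 2 + r) * α r) * ci q (N - r) * ci q (N + r + 1) := by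
  simp only [mul_sum]
  rw [sum_comm' (t' := range (N + 1)) (s' := fun r => Ico r (N + 1))
    (by intro n r; simp only [mem_range, mem_Ico]; omega)]
  apply sum_congr rfl
  intro r hr
  have hr' : r ≤ N := by simpa [Nat.lt_succ_iff] using hr
  obtain ⟨M, rfl⟩ := Nat.exists_eq_add_of_le hr'
  rw [sum_Ico_eq_sum_range, show r + M + 1 - r = M + 1 by omega, show r + M - r = M by omega]
  have h := vand hq M (2 * r + 1)
  rw [show r + M + r + 1 = M + (2 * r + 1) by ring,
    show q ^ (r ^ 2 + r) * α r * ci q M * ci q (M + (2 * r + 1))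
      = q ^ (r ^ 2 + r) * α r * (ci q M * ci q (M + (2 * r + 1))) by ring, ← h, mul_sum]
  apply sum_congr rfl
  intro m _
  rw [show r + M - (r + m) = M - m by omega, show r + m - r = m by omega,
    show r + m + r + 1 = m + (2 * r + 1) by ring]
  ring

lemma base_tel {q : ℂ} (hq : ‖q‖ < 1) (n m : ℕ) (hm : m ≤ n + 1) :
    ∑ r ∈ range m, ((-1) ^ r * q ^ (r ^ 2) * (1 - q ^ (2 * r + 1))) *
      ((1 - q ^ (2 * (n + 1))) * (ci q (n + 1 - r) * ci q (n + 1 + r + 1))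
        - ci q (n - r) * ci q (n + r + 1))
      = - ((-1) ^ m * q ^ (m ^ 2 + (n + 1 - m)) * (1 - q ^ (2 * m)) * ci q (n + 1 - m) *
          ci q (n + 1 + m)) := by
  induction m with
  | zero => simp
  | succ m ih =>
    rw [sum_range_succ, ih (by omega)]
    obtain ⟨d, rfl⟩ : ∃ d, n = m + d := Nat.exists_eq_add_of_le (by omega)
    rw [show m + d + 1 - m = d + 1 by omega, show m + d - m = d by omega,
      show m + d + 1 - (m + 1) = d by omega, show m + d + 1 + (m + 1) = m + d + 1 + m + 1 by ring,
      show m + d + m + 1 = m + d + 1 + m by ring, ci_succ hq d, ci_succ hq (m + d + 1 + m)]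
    ring

lemma base_rec {q : ℂ} (hq : ‖q‖ < 1) (n : ℕ) :
    (1 - q ^ (2 * (n + 1))) * ∑ r ∈ range (n + 2),
      ((-1) ^ r * q ^ (r ^ 2) * (1 - q ^ (2 * r + 1))) * ci q (n + 1 - r) * ci q (n + 1 + r + 1)
    = ∑ r ∈ range (n + 1), ((-1) ^ r * q ^ (r ^ 2) * (1 - q ^ (2 * r + 1))) * ci q (n - r) *
        ci q (n + r + 1) := by
  have h := base_tel hq n (n + 1) le_rfl
  simp only [mul_sub, sum_sub_distrib] at h
  rw [sum_range_succ, mul_add, mul_sum]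
  rw [ci_succ hq (n + 1 + (n + 1)), Nat.sub_self] at h
  have e : ∀ r, (1 - q ^ (2 * (n + 1))) * ((-1) ^ r * q ^ (r ^ 2) * (1 - q ^ (2 * r + 1)) *
      ci q (n + 1 - r) * ci q (n + 1 + r + 1)) = (-1) ^ r * q ^ (r ^ 2) * (1 - q ^ (2 * r + 1)) *
      ((1 - q ^ (2 * (n + 1))) * (ci q (n + 1 - r) * ci q (n + 1 + r + 1))) := by
    intro r; ring
  have e' : ∀ r, (-1) ^ r * q ^ (r ^ 2) * (1 - q ^ (2 * r + 1)) *
      ci q (n - r) * ci q (n + r + 1) = (-1) ^ r * q ^ (r ^ 2) * (1 - q ^ (2 * r + 1)) *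
      (ci q (n - r) * ci q (n + r + 1)) := by
    intro r; ring
  simp only [e, e', Nat.sub_self]
  simp only [mul_sub]
  linear_combination h

lemma one_add_ne {q : ℂ} (hq : ‖q‖ < 1) (n : ℕ) : 1 + q ^ (n + 1) ≠ 0 := by
  have h := one_sub_ne hq (2 * n + 1)
  intro h'
  apply h
  rw [show 2 * n + 1 + 1 = (n + 1) + (n + 1) by ring, pow_add]
  linear_combination (1 - q ^ (n + 1)) * h'

lemma base_pair {q : ℂ} (hq : ‖q‖ < 1) (n : ℕ) :
    ∑ r ∈ range (n + 1), ((-1) ^ r * q ^ (r ^ 2) * (1 - q ^ (2 * r + 1))) * ci q (n - r) *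
        ci q (n + r + 1) = ci q n * (qPoch (-q) q n)⁻¹ := by
  induction n with
  | zero =>
    have := ci_succ hq 0
    simp [ci_zero, qPoch] at this ⊢
    linear_combination -this
  | succ n ih =>
    have h := base_rec hq n
    rw [ih] at h
    have h0 := one_sub_ne hq (2 * n + 1)
    have h1 := one_add_ne hq n
    have h3 : qPoch (-q) q (n + 1) = qPoch (-q) q n * (1 + q ^ (n + 1)) := by
      simp [qPoch, prod_range_succ, pow_succ']
    apply mul_left_cancel₀ (show 1 - q ^ (2 * (n + 1)) ≠ 0 from h0)
    rw [h, h3, ci_succ hq n, mul_inv]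
    field_simp
    ring

/-- `c_r = y^{r(r+1)/2} x^{r(r-1)/2}` -/
def jc (y Q : ℂ) : ℕ → ℂ
  | 0 => 1
  | (r + 1) => jc y Q r * (y * Q ^ r)

lemma jac_tel {Q x y : ℂ} (hQ : ‖Q‖ < 1) (hxy : Q = x * y) (n m : ℕ) (hm : m ≤ n + 1) :
    ∑ r ∈ range m, ((-1) ^ r * jc y Q r * (1 - x ^ (2 * r + 1))) *
      ((1 - Q ^ (2 * n + 2)) * (1 - Q ^ (2 * n + 3)) * (ci Q (n + 1 - r) * ci Q (n + 1 + r + 1))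
        - (1 - x * Q ^ (n + 1)) * (1 - y * Q ^ n) * (ci Q (n - r) * ci Q (n + r + 1)))
      = - ((-1) ^ m * jc y Q m * Q ^ (n + 1 - m) *
          ((1 + x * Q ^ m - x * Q ^ (n + 1) - Q ^ (m + n + 1))
            - x ^ (2 * m) * (Q ^ m + x - x * Q ^ (m + n + 1) - Q ^ (n + 1)))
          * ci Q (n + 1 - m) * ci Q (n + 1 + m)) := by
  induction m with
  | zero => simp
  | succ m ih =>
    rw [sum_range_succ, ih (by omega)]
    obtain ⟨d, rfl⟩ : ∃ d, n = m + d := Nat.exists_eq_add_of_le (by omega)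
    rw [show m + d + 1 - m = d + 1 by omega, show m + d - m = d by omega,
      show m + d + 1 - (m + 1) = d by omega, show m + d + 1 + (m + 1) = m + d + 1 + m + 1 by ring,
      show m + d + m + 1 = m + d + 1 + m by ring, ci_succ hQ d, ci_succ hQ (m + d + 1 + m), jc]
    generalize ci Q (d + 1) = C1
    generalize ci Q (m + d + 1 + m + 1) = C2
    generalize jc y Q m = J
    simp only [pow_succ, pow_add, mul_add, mul_one, two_mul]
    generalize (-1 : ℂ) ^ m = e
    generalize Q ^ m = X
    generalize Q ^ d = A
    generalize x ^ m = Z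
    subst hxy
    ring

lemma jac_rec {Q x y : ℂ} (hQ : ‖Q‖ < 1) (hxy : Q = x * y) (n : ℕ) :
    (1 - Q ^ (2 * n + 2)) * (1 - Q ^ (2 * n + 3)) * ∑ r ∈ range (n + 2),
      ((-1) ^ r * jc y Q r * (1 - x ^ (2 * r + 1))) * ci Q (n + 1 - r) * ci Q (n + 1 + r + 1)
    = (1 - x * Q ^ (n + 1)) * (1 - y * Q ^ n) *
      ∑ r ∈ range (n + 1), ((-1) ^ r * jc y Q r * (1 - x ^ (2 * r + 1))) * ci Q (n - r) *
        ci Q (n + r + 1) := by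
  have h := jac_tel hQ hxy n (n + 1) le_rfl
  simp only [mul_sub _ ((1 - Q ^ (2 * n + 2)) * _ * _), sum_sub_distrib] at h
  rw [sum_range_succ, mul_add, mul_sum, mul_sum]
  rw [ci_succ hQ (n + 1 + (n + 1)), Nat.sub_self] at h
  have e : ∀ r, (1 - Q ^ (2 * n + 2)) * (1 - Q ^ (2 * n + 3)) *
      ((-1) ^ r * jc y Q r * (1 - x ^ (2 * r + 1)) *
      ci Q (n + 1 - r) * ci Q (n + 1 + r + 1)) = (-1) ^ r * jc y Q r * (1 - x ^ (2 * r + 1)) *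
      ((1 - Q ^ (2 * n + 2)) * (1 - Q ^ (2 * n + 3)) *
        (ci Q (n + 1 - r) * ci Q (n + 1 + r + 1))) := by
    intro r; ring
  have e' : ∀ r, (1 - x * Q ^ (n + 1)) * (1 - y * Q ^ n) * ((-1) ^ r * jc y Q r *
      (1 - x ^ (2 * r + 1)) * ci Q (n - r) * ci Q (n + r + 1)) =
      (-1) ^ r * jc y Q r * (1 - x ^ (2 * r + 1)) * ((1 - x * Q ^ (n + 1)) * (1 - y * Q ^ n) *
      (ci Q (n - r) * ci Q (n + r + 1))) := by
    intro r; ring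
  simp only [e, e', Nat.sub_self]
  linear_combination h

lemma jac_fin {Q x y : ℂ} (hQ : ‖Q‖ < 1) (hxy : Q = x * y) (n : ℕ) :
    ∑ r ∈ range (n + 1), ((-1) ^ r * jc y Q r * (1 - x ^ (2 * r + 1))) * ci Q (n - r) *
        ci Q (n + r + 1) = qPoch x Q (n + 1) * qPoch y Q n * ci Q (2 * n + 1) := by
  induction n with
  | zero => simp [ci_zero, qPoch, jc]
  | succ n ih =>
    have h := jac_rec hQ hxy n
    rw [ih] at h
    have h0 := one_sub_ne hQ (2 * n + 1)
    have h1 := one_sub_ne hQ (2 * n + 2)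
    have h3 : qPoch x Q (n + 1 + 1) = qPoch x Q (n + 1) * (1 - x * Q ^ (n + 1)) := by
      rw [qPoch, prod_range_succ]; rfl
    have h4 : qPoch y Q (n + 1) = qPoch y Q n * (1 - y * Q ^ n) := by
      rw [qPoch, prod_range_succ]; rfl
    apply mul_left_cancel₀ (mul_ne_zero h0 h1)
    rw [h, h3, h4, ci_succ hQ (2 * n + 1), ci_succ hQ (2 * n + 2)]
    ring


open Filter Topology

lemma summable_aux {q : ℂ} (hq : ‖q‖ < 1) (x : ℂ) : Summable fun k : ℕ => ‖-(x * q ^ k)‖ := by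
  simp only [norm_neg, norm_mul, norm_pow]
  exact (summable_geometric_of_lt_one (norm_nonneg q) hq).mul_left _

lemma poch_tendsto {q : ℂ} (hq : ‖q‖ < 1) (x : ℂ) :
    Tendsto (fun n => qPoch x q n) atTop (𝓝 (qPochInf x q)) := by
  have h := multipliable_one_add_of_summable (summable_aux hq x)
  have h2 := h.hasProd.tendsto_prod_nat
  simpa [qPoch, qPochInf, sub_eq_add_neg] using h2

lemma pochInf_ne {q : ℂ} (hq : ‖q‖ < 1) (x : ℂ) (hx : ∀ k, 1 - x * q ^ k ≠ 0) :
    qPochInf x q ≠ 0 := by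
  have h := tprod_one_add_ne_zero_of_summable (f := fun k => -(x * q ^ k))
    (by intro k; simpa [sub_eq_add_neg] using hx k) (summable_aux hq x)
  simpa [qPochInf, sub_eq_add_neg] using h

lemma qInf_ne {q : ℂ} (hq : ‖q‖ < 1) : qPochInf q q ≠ 0 := by
  apply pochInf_ne hq
  intro k
  have := one_sub_ne hq k
  rwa [pow_succ'] at this

lemma ci_tendsto {q : ℂ} (hq : ‖q‖ < 1) :
    Tendsto (fun n => ci q n) atTop (𝓝 (qPochInf q q)⁻¹) :=
  (poch_tendsto hq q).inv₀ (qInf_ne hq)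

lemma bdd_of_tendsto {f : ℕ → ℂ} {L : ℂ} (h : Tendsto f atTop (𝓝 L)) :
    ∃ C, ∀ n, ‖f n‖ ≤ C := by
  obtain ⟨C, hC⟩ := (Metric.isBounded_range_of_tendsto f h).exists_norm_le
  exact ⟨C, fun n => hC _ ⟨n, rfl⟩⟩

lemma ci_bdd {q : ℂ} (hq : ‖q‖ < 1) : ∃ C, ∀ n, ‖ci q n‖ ≤ C := bdd_of_tendsto (ci_tendsto hq)

lemma bi_bdd {q : ℂ} (hq : ‖q‖ < 1) : ∃ C, ∀ n, ‖(qPoch (-q) q n)⁻¹‖ ≤ C := by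
  refine bdd_of_tendsto ((poch_tendsto hq (-q)).inv₀ (pochInf_ne hq _ ?_))
  intro k
  have := one_add_ne hq k
  rw [pow_succ'] at this
  simpa using this

lemma tann {a : ℕ → ℂ} (ha : Summable fun r => ‖a r‖) {f : ℕ → ℕ → ℂ} {C : ℝ}
    (hf : ∀ n r, ‖f n r‖ ≤ C) {L : ℂ} (hL : ∀ r, Tendsto (fun n => f n r) atTop (𝓝 L)) :
    Tendsto (fun n => ∑ r ∈ range (n + 1), a r * f n r) atTop (𝓝 ((∑' r, a r) * L)) := by
  have key := tendsto_tsum_of_dominated_convergence (𝓕 := atTop)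
    (f := fun (n r : ℕ) => if r ∈ range (n + 1) then a r * f n r else 0)
    (g := fun r => a r * L) (bound := fun r => ‖a r‖ * C) (ha.mul_right C) ?_ ?_
  · rw [← tsum_mul_right]
    refine key.congr ?_
    intro n
    rw [tsum_eq_sum (s := range (n + 1)) (by intro b hb; simp only [hb, if_false])]
    exact sum_congr rfl (fun r hr => by simp only [hr, if_true])
  · intro r
    refine ((hL r).const_mul (a r)).congr' ?_
    filter_upwards [eventually_ge_atTop r] with n hn
    rw [if_pos (by simp; omega)]
  · refine Eventually.of_forall fun n r => ?_
    have hC : 0 ≤ C := (norm_nonneg _).trans (hf 0 0)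
    split_ifs
    · rw [norm_mul]; gcongr; exact hf n r
    · simp; positivity

/-- Recursively defined nested sums. -/
def BG {R : Type*} [CommSemiring R] (a c b : ℕ → R) : ℕ → ℕ → R
  | 0, n => c n * b n
  | (j + 1), n => ∑ r ∈ range (n + 1), c (n - r) * a r * BG a c b j r

lemma BG_bdd {R : Type*} [NormedField R] {a c b : ℕ → R} {C D : ℝ}
    (ha : Summable fun r => ‖a r‖) (hc : ∀ n, ‖c n‖ ≤ C) (hb : ∀ n, ‖b n‖ ≤ D) (j : ℕ) :
    ∃ E, ∀ n, ‖BG a c b j n‖ ≤ E := by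
  have hC : 0 ≤ C := (norm_nonneg _).trans (hc 0)
  induction j with
  | zero =>
    refine ⟨C * D, fun n => ?_⟩
    rw [BG, norm_mul]
    exact mul_le_mul (hc n) (hb n) (norm_nonneg _) hC
  | succ j ih =>
    obtain ⟨E, hE⟩ := ih
    have hE0 : 0 ≤ E := (norm_nonneg _).trans (hE 0)
    refine ⟨∑' r, C * ‖a r‖ * E, fun n => ?_⟩
    rw [BG]
    refine (norm_sum_le _ _).trans ?_
    refine le_trans (sum_le_sum (g := fun r => C * ‖a r‖ * E) fun r _ => ?_)
      (((ha.mul_left C).mul_right E).sum_le_tsum _ fun r _ => by positivity)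
    rw [norm_mul, norm_mul]
    gcongr
    · exact hc _
    · exact hE _

/-- prepend a part -/
def pcons (m : ℕ) (l : ℕ → ℕ) : ℕ → ℕ
  | 0 => m
  | (i + 1) => l i

/-- The finite set of partitions with at most `k` parts, all at most `n`. -/
noncomputable def PS : ℕ → ℕ → Finset (ℕ → ℕ)
  | 0, _ => {fun _ => 0}
  | (k + 1), n => by
    classical exact (range (n + 1)).biUnion fun m => (PS k m).image (pcons m)

lemma pcons_inj (m : ℕ) : Function.Injective (pcons m) := by
  intro l l' h
  funext i
  exact congrFun h (i + 1)

lemma mem_PS (k n : ℕ) (l : ℕ → ℕ) :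
    l ∈ PS k n ↔ (Antitone l ∧ (∀ i, k ≤ i → l i = 0)) ∧ l 0 ≤ n := by
  induction k generalizing n l with
  | zero =>
    simp only [PS, mem_singleton]
    constructor
    · rintro rfl
      exact ⟨⟨fun _ _ _ => le_rfl, fun _ _ => rfl⟩, Nat.zero_le _⟩
    · rintro ⟨⟨_, h⟩, _⟩
      funext i
      exact h i (Nat.zero_le _)
  | succ k ih =>
    simp only [PS, mem_biUnion, mem_image, mem_range, ih]
    constructor
    · rintro ⟨m, hm, l, ⟨⟨h1, h2⟩, h3⟩, rfl⟩
      refine ⟨⟨antitone_nat_of_succ_le ?_, ?_⟩, by simp only [pcons]; omega⟩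
      · intro i
        cases i with
        | zero => exact h3
        | succ i => exact h1 (Nat.le_succ i)
      · intro i hi
        cases i with
        | zero => omega
        | succ i => exact h2 i (by omega)
    · rintro ⟨⟨h1, h2⟩, h3⟩
      refine ⟨l 0, by omega, fun i => l (i + 1), ⟨⟨?_, ?_⟩, ?_⟩, ?_⟩
      · intro i j hij; exact h1 (by omega)
      · intro i hi; exact h2 _ (by omega)
      · exact h1 (by omega)
      · funext i; cases i <;> rfl

lemma sum_PS_succ {R : Type*} [CommSemiring R] (k n : ℕ) (F : (ℕ → ℕ) → R) :
    ∑ l ∈ PS (k + 1) n, F l = ∑ m ∈ range (n + 1), ∑ l ∈ PS k m, F (pcons m l) := by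
  classical
  rw [PS, sum_biUnion]
  · apply sum_congr rfl
    intro m _
    rw [sum_image]
    exact fun _ _ _ _ h => pcons_inj m h
  · intro m _ m' _ hne
    rw [Function.onFun, disjoint_left]
    intro l hl hl'
    simp only [mem_image] at hl hl'
    obtain ⟨l1, _, rfl⟩ := hl
    obtain ⟨l2, _, h⟩ := hl'
    exact hne (congrFun h 0).symm

/-- general summand -/
def tm {R : Type*} [CommSemiring R] (a c b : ℕ → R) (k : ℕ) (l : ℕ → ℕ) : R :=
  (∏ i ∈ range k, (a (l i) * c (l i - l (i + 1)))) * b (l (k - 1))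

lemma sum_tm {R : Type*} [CommSemiring R] (a c b : ℕ → R) (k n : ℕ) (h : ℕ → R) :
    ∑ l ∈ PS (k + 1) n, tm a c b (k + 1) l * h (l 0)
      = ∑ r ∈ range (n + 1), a r * BG a c b k r * h r := by
  induction k generalizing n h with
  | zero =>
    rw [sum_PS_succ]
    apply sum_congr rfl
    intro m _
    simp [PS, tm, BG, pcons]
    ring
  | succ k ih =>
    rw [sum_PS_succ]
    apply sum_congr rfl
    intro m _
    have e : ∀ l, tm a c b (k + 1 + 1) (pcons m l) * h (pcons m l 0)
        = a m * h m * (tm a c b (k + 1) l * c (m - l 0)) := by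
      intro l
      simp only [tm]
      rw [prod_range_succ' _ (k + 1)]
      simp only [pcons, Nat.add_sub_cancel]
      ring
    simp only [e]
    rw [← mul_sum, ih m (fun r => c (m - r)), BG, mul_sum, mul_sum, sum_mul]
    apply sum_congr rfl
    intro r _
    ring

lemma sum_tm' {R : Type*} [CommSemiring R] (a c b : ℕ → R) (k n : ℕ) :
    ∑ l ∈ PS (k + 1) n, tm a c b (k + 1) l = ∑ r ∈ range (n + 1), a r * BG a c b k r := by
  simpa using sum_tm a c b k n (fun _ => 1)

/-- the finite subset of `PartK k` of partitions with largest part at most `n` -/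
noncomputable def PK (k n : ℕ) : Finset (PartK k) :=
  (PS k n).preimage (fun l : PartK k => l.1) (fun _ _ _ _ h => Subtype.ext h)

lemma mem_PK (k n : ℕ) (l : PartK k) : l ∈ PK k n ↔ l.1 0 ≤ n := by
  have h1 : l ∈ PK k n ↔ l.1 ∈ PS k n := mem_preimage
  exact h1.trans ((mem_PS k n l.1).trans ⟨fun h => h.2, fun h => ⟨l.2, h⟩⟩)

lemma sum_PK {R : Type*} [CommSemiring R] (k n : ℕ) (F : (ℕ → ℕ) → R) :
    ∑ l ∈ PK k n, F l.1 = ∑ l ∈ PS k n, F l := by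
  unfold PK
  refine sum_preimage (fun l : PartK k => l.1) (PS k n) _ F ?_
  intro l hl hl'
  exact absurd ⟨⟨l, ((mem_PS k n l).1 hl).1⟩, rfl⟩ hl'

lemma PK_tendsto (k : ℕ) : Tendsto (PK k) atTop atTop := by
  refine tendsto_atTop_finset_of_monotone ?_ ?_
  · intro m n hmn l hl
    rw [mem_PK] at hl ⊢
    omega
  · intro l
    exact ⟨l.1 0, by rw [mem_PK]⟩

lemma summable_tm {a c b : ℕ → ℂ} {C D : ℝ}
    (ha : Summable fun r => ‖a r‖) (hc : ∀ n, ‖c n‖ ≤ C) (hb : ∀ n, ‖b n‖ ≤ D) (k : ℕ) :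
    Summable fun l : PartK (k + 1) => tm a c b (k + 1) l.1 := by
  obtain ⟨E, hE⟩ := BG_bdd (R := ℝ) (a := fun r => ‖a r‖) (c := fun r => ‖c r‖)
    (b := fun r => ‖b r‖) (by simpa using ha) (by simpa using hc) (by simpa using hb) k
  have hE0 : 0 ≤ E := (norm_nonneg _).trans (hE 0)
  apply Summable.of_norm
  have e : ∀ l, ‖tm a c b (k + 1) l‖
      = tm (fun r => ‖a r‖) (fun r => ‖c r‖) (fun r => ‖b r‖) (k + 1) l := by
    intro l
    simp [tm, norm_prod]
  refine summable_of_sum_le (c := ∑' r, ‖a r‖ * E) (fun l => norm_nonneg _) ?_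
  intro u
  obtain ⟨n, hn⟩ := (tendsto_atTop.1 (PK_tendsto (k + 1)) u).exists
  refine (sum_le_sum_of_subset_of_nonneg hn fun _ _ _ => norm_nonneg _).trans ?_
  rw [sum_PK (k + 1) n (fun l => ‖tm a c b (k + 1) l‖)]
  simp only [e]
  rw [sum_tm']
  refine le_trans (sum_le_sum (g := fun r => ‖a r‖ * E) fun r _ => ?_)
      ((ha.mul_right E).sum_le_tsum _ fun r _ => by positivity)
  gcongr
  exact (Real.le_norm_self _).trans (hE r)

lemma tsum_tm {a c b : ℕ → ℂ} {C D : ℝ}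
    (ha : Summable fun r => ‖a r‖) (hc : ∀ n, ‖c n‖ ≤ C) (hb : ∀ n, ‖b n‖ ≤ D) (k : ℕ) :
    (Summable fun r => ‖a r * BG a c b k r‖) ∧
    ∑' l : PartK (k + 1), tm a c b (k + 1) l.1 = ∑' r, a r * BG a c b k r := by
  obtain ⟨E, hE⟩ := BG_bdd ha hc hb k
  have hs : Summable fun r => ‖a r * BG a c b k r‖ := by
    refine Summable.of_nonneg_of_le (fun _ => norm_nonneg _) (fun r => ?_) (ha.mul_right E)
    rw [norm_mul]
    gcongr
    exact hE r
  refine ⟨hs, ?_⟩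
  have h1 := (summable_tm ha hc hb k).hasSum.comp (PK_tendsto (k + 1))
  have h2 := (hs.of_norm.hasSum.tendsto_sum_nat).comp (tendsto_add_atTop_nat 1)
  refine tendsto_nhds_unique h1 (h2.congr ?_)
  intro n
  simp only [Function.comp]
  rw [← sum_tm', sum_PK (k + 1) n (fun l => tm a c b (k + 1) l)]

lemma bailey {q : ℂ} (hq : ‖q‖ < 1) (j n : ℕ) :
    BG (fun r => q ^ (r ^ 2 + r)) (ci q) (fun m => (qPoch (-q) q m)⁻¹) j n
      = ∑ r ∈ range (n + 1), (q ^ (j * (r ^ 2 + r)) *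
          ((-1) ^ r * q ^ (r ^ 2) * (1 - q ^ (2 * r + 1)))) * ci q (n - r) * ci q (n + r + 1) := by
  induction j generalizing n with
  | zero =>
    rw [BG, ← base_pair hq n]
    simp
  | succ j ih =>
    rw [BG]
    simp only [ih]
    rw [bailey_step hq]
    apply sum_congr rfl
    intro r _
    ring

lemma jc_eq (q : ℂ) (k r : ℕ) :
    jc (q ^ (2 * k + 1)) (q ^ (2 * k + 2)) r = q ^ (k * (r ^ 2 + r)) * q ^ (r ^ 2) := by
  induction r with
  | zero => simp [jc]
  | succ r ih => rw [jc, ih]; ring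

lemma two_ci_tendsto {q : ℂ} (hq : ‖q‖ < 1) {a : ℕ → ℂ} (ha : Summable fun r => ‖a r‖) :
    Tendsto (fun n => ∑ r ∈ range (n + 1), a r * ci q (n - r) * ci q (n + r + 1)) atTop
      (𝓝 ((∑' r, a r) * ((qPochInf q q)⁻¹ * (qPochInf q q)⁻¹))) := by
  obtain ⟨C, hC⟩ := ci_bdd hq
  have hC0 : 0 ≤ C := (norm_nonneg _).trans (hC 0)
  simp only [mul_assoc]
  refine tann ha (f := fun n r => ci q (n - r) * ci q (n + r + 1)) (C := C * C) ?_ ?_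
  · intro n r
    rw [norm_mul]
    exact mul_le_mul (hC _) (hC _) (norm_nonneg _) hC0
  · intro r
    refine Tendsto.mul ((ci_tendsto hq).comp (tendsto_sub_atTop_nat r)) ?_
    exact (ci_tendsto hq).comp (tendsto_add_atTop_nat (r + 1))

lemma main {q : ℂ} (hq : ‖q‖ < 1) (k : ℕ) :
    ∑' l : PartK (k + 1), tm (fun r => q ^ (r ^ 2 + r)) (ci q) (fun m => (qPoch (-q) q m)⁻¹)
        (k + 1) l.1
      = qPochInf (q ^ (2 * (k + 1) + 2)) (q ^ (2 * (k + 1) + 2)) *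
          qPochInf (q ^ (2 * (k + 1) + 1)) (q ^ (2 * (k + 1) + 2)) *
          qPochInf q (q ^ (2 * (k + 1) + 2)) / qPochInf q q := by
  obtain ⟨C, hC⟩ := ci_bdd hq
  obtain ⟨D, hD⟩ := bi_bdd hq
  have hgeo := summable_geometric_of_lt_one (norm_nonneg q) hq
  have ha : Summable fun r : ℕ => ‖q ^ (r ^ 2 + r)‖ := by
    refine Summable.of_nonneg_of_le (fun _ => norm_nonneg _) (fun r => ?_) hgeo
    rw [norm_pow]
    exact pow_le_pow_of_le_one (norm_nonneg q) hq.le (by omega)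
  obtain ⟨hs, hts⟩ := tsum_tm ha hC hD k
  rw [hts]
  set s : ℕ → ℂ := fun r => q ^ ((k + 1) * (r ^ 2 + r)) *
          ((-1) ^ r * q ^ (r ^ 2) * (1 - q ^ (2 * r + 1))) with hsdef
  have hss : Summable fun r => ‖s r‖ := by
    refine Summable.of_nonneg_of_le (fun _ => norm_nonneg _) (fun r => ?_) (hgeo.mul_right 2)
    have h1 : ‖q ^ ((k + 1) * (r ^ 2 + r))‖ ≤ ‖q‖ ^ r := by
      rw [norm_pow]
      exact pow_le_pow_of_le_one (norm_nonneg q) hq.le (by nlinarith [Nat.zero_le (k * (r ^ 2 + r)), Nat.zero_le (r ^ 2)])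
    have h2 : ‖q ^ (r ^ 2)‖ ≤ 1 := by
      rw [norm_pow]; exact pow_le_one₀ (norm_nonneg q) hq.le
    have h3 : ‖1 - q ^ (2 * r + 1)‖ ≤ 2 := by
      refine (norm_sub_le _ _).trans ?_
      have : ‖q ^ (2 * r + 1)‖ ≤ 1 := by
        rw [norm_pow]; exact pow_le_one₀ (norm_nonneg q) hq.le
      rw [norm_one]; linarith
    simp only [hsdef, norm_mul]
    have h4 : ‖((-1 : ℂ)) ^ r‖ = 1 := by simp
    rw [h4, one_mul]
    refine mul_le_mul h1 ?_ (by positivity) (by positivity)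
    calc _ ≤ (1 : ℝ) * 2 := mul_le_mul h2 h3 (norm_nonneg _) zero_le_one
      _ = 2 := one_mul 2
  -- first limit
  have l1 := tann hs (f := fun n r => ci q (n - r)) (fun n r => hC _)
    (fun r => (ci_tendsto hq).comp (tendsto_sub_atTop_nat r))
  have l2 := two_ci_tendsto hq hss
  have e1 := tendsto_nhds_unique l1 (l2.congr fun n => by
    rw [← bailey hq (k + 1) n, BG]
    exact sum_congr rfl fun r _ => by ring)
  -- Jacobi
  set Q := q ^ (2 * (k + 1) + 2) with hQdef
  have hQ : ‖Q‖ < 1 := by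
    rw [hQdef, norm_pow]
    exact pow_lt_one₀ (norm_nonneg q) hq (by omega)
  have hsj : ∀ r, s r = (-1) ^ r * jc (q ^ (2 * (k + 1) + 1)) Q r * (1 - q ^ (2 * r + 1)) := by
    intro r
    rw [hQdef, jc_eq]
    simp only [hsdef]
    ring
  have l3 := two_ci_tendsto hQ hss
  have l4 : Tendsto (fun n => qPoch q Q (n + 1) * qPoch (q ^ (2 * (k + 1) + 1)) Q n *
      ci Q (2 * n + 1)) atTop (𝓝 (qPochInf q Q * qPochInf (q ^ (2 * (k + 1) + 1)) Q *
        (qPochInf Q Q)⁻¹)) := by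
    refine Tendsto.mul (Tendsto.mul ?_ (poch_tendsto hQ _)) ?_
    · exact (poch_tendsto hQ q).comp (tendsto_add_atTop_nat 1)
    · refine (ci_tendsto hQ).comp (tendsto_atTop_mono (fun n => ?_) tendsto_id)
      simp only [id]; omega
  have e2 := tendsto_nhds_unique l4 (l3.congr fun n => by
    rw [← jac_fin hQ (x := q) (by rw [hQdef]; ring) n]
    exact sum_congr rfl fun r _ => by rw [hsj])
  have n1 := qInf_ne hq
  have n2 := qInf_ne hQ
  rw [eq_div_iff n1]
  generalize (∑' (r : ℕ), q ^ (r ^ 2 + r) * BG _ _ _ k r) = T at e1 ⊢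
  field_simp at e1 e2
  linear_combination e1 - e2

end AG15

/-- Identity (15): for `k ≥ 1`, `|q| < 1`,
`Σ_{l(λ)≤k} q^{|λ|+n_2(λ)} / ((-q;q)_{λ_k} (q;q)_λ)
  = (q^{2k+2},q^{2k+1},q;q^{2k+2})_∞ / (q;q)_∞`. -/
theorem andrews_gordon_type_15 (k : ℕ) (hk : 1 ≤ k) (q : ℂ) (hq : ‖q‖ < 1) :
    ∑' lam : PartK k,
        q ^ (wtK k lam + n2K k lam) /
          (qPoch (-q) q (lam.1 (k - 1)) * pochK q q k lam)
      = qPochInf (q ^ (2 * k + 2)) (q ^ (2 * k + 2)) *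
          qPochInf (q ^ (2 * k + 1)) (q ^ (2 * k + 2)) *
          qPochInf q (q ^ (2 * k + 2)) / qPochInf q q := by
  obtain ⟨k, rfl⟩ : ∃ j, k = j + 1 := ⟨k - 1, by omega⟩
  rw [← AG15.main hq k]
  apply tsum_congr
  intro l
  simp only [AG15.tm, AG15.ci, wtK, n2K, pochK]
  rw [Finset.prod_mul_distrib, Finset.prod_inv_distrib, Finset.prod_pow_eq_pow_sum,
    Finset.sum_add_distrib, div_eq_mul_inv, mul_inv, add_comm (∑ i ∈ Finset.range (k + 1), l.1 i)]
  ring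
end

section
/- For each k ≥ 1 and |q| < 1: Σ_{λ: l(λ) ≤ k} q^{|λ| + n_2(λ) - (λ_1^2 + λ_1)/2} (-q;q)_{λ_1} / ((-q;q)_{λ_k} (q;q)_λ) = ((-q;q)_∞ / (q;q)_∞) · (q^{2k+1}, q^{2k}, q; q^{2k+1})_∞. -/
namespace RR

/-- `R q j = 1/(q;q)_j`, zero for negative `j`. -/
noncomputable def R (q : ℂ) (j : ℤ) : ℂ := if j < 0 then 0 else (qPoch q q j.toNat)⁻¹

lemma one_sub_pow_ne {q : ℂ} (hq : ‖q‖ < 1) (n : ℕ) : 1 - q ^ (n + 1) ≠ 0 := by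
  intro h
  have h1 : q ^ (n + 1) = 1 := (sub_eq_zero.mp h).symm
  have h2 : ‖q‖ ^ (n + 1) < 1 := pow_lt_one₀ (norm_nonneg _) hq (by omega)
  rw [← norm_pow, h1] at h2
  simp at h2

lemma qPoch_succ (x q : ℂ) (n : ℕ) : qPoch x q (n + 1) = qPoch x q n * (1 - x * q ^ n) := by
  simp [qPoch, Finset.prod_range_succ]

lemma qPoch_succ' (x q : ℂ) (n : ℕ) : qPoch x q (n + 1) = (1 - x) * qPoch (x * q) q n := by
  simp only [qPoch, Finset.prod_range_succ']
  rw [mul_comm]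
  congr 1
  · simp
  · refine Finset.prod_congr rfl fun i _ => ?_
    ring

lemma qPoch_add (x q : ℂ) (m n : ℕ) :
    qPoch x q (m + n) = qPoch x q m * qPoch (x * q ^ m) q n := by
  simp only [qPoch, Finset.prod_range_add]
  congr 1
  refine Finset.prod_congr rfl fun i _ => ?_
  ring

@[simp] lemma qPoch_zero (x q : ℂ) : qPoch x q 0 = 1 := by simp [qPoch]

lemma R_nat (q : ℂ) (n : ℕ) : R q (n : ℤ) = (qPoch q q n)⁻¹ := by
  simp [R]

lemma R_neg (q : ℂ) {j : ℤ} (h : j < 0) : R q j = 0 := by simp [R, h]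

@[simp] lemma R_zero (q : ℂ) : R q 0 = 1 := by simp [R]

lemma R_succ {q : ℂ} (hq : ‖q‖ < 1) (n : ℕ) :
    R q (n : ℤ) = (1 - q ^ (n + 1)) * R q ((n : ℤ) + 1) := by
  have : ((n : ℤ) + 1) = ((n + 1 : ℕ) : ℤ) := by push_cast; ring
  rw [this, R_nat, R_nat, qPoch_succ, ← pow_succ', mul_inv]
  field_simp [one_sub_pow_ne hq n]

lemma R_pred {q : ℂ} (hq : ‖q‖ < 1) (n : ℕ) :
    R q ((n : ℤ) - 1) = (1 - q ^ n) * R q n := by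
  cases n with
  | zero => simp [R]
  | succ n => push_cast; rw [add_sub_cancel_right]; exact R_succ hq n

/-- First summation. -/
lemma V1 {q : ℂ} (hq : ‖q‖ < 1) (m : ℕ) : ∀ N : ℕ,
    ∑ j ∈ Finset.range (m + 1), q ^ (j * (j + N)) * (R q ((m : ℤ) - j) * R q j * R q ((j : ℤ) + N))
      = R q m * R q ((m : ℤ) + N) := by
  induction m with
  | zero => intro N; simp
  | succ m ih =>
    intro N
    have key : ∀ j ∈ Finset.range (m + 2), (1 - q ^ (m + 1)) *
        (q ^ (j * (j + N)) * (R q (((m + 1 : ℕ) : ℤ) - j) * R q j * R q ((j : ℤ) + N)))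
        = q ^ (j * (j + N)) * (R q ((m : ℤ) - j) * R q j * R q ((j : ℤ) + N)) +
          q ^ (m + 1 - j) * q ^ (j * (j + N)) *
            (R q (((m + 1 : ℕ) : ℤ) - j) * R q ((j : ℤ) - 1) * R q ((j : ℤ) + N)) := by
      intro j hj
      have hj' : j ≤ m + 1 := by simp at hj; omega
      obtain ⟨i, hi⟩ := Nat.exists_eq_add_of_le hj'
      have e1 : (((m + 1 : ℕ) : ℤ) - j) = (i : ℤ) := by rw [hi]; push_cast; ring
      have e2 : ((m : ℤ) - j) = (i : ℤ) - 1 := by rw [← e1]; push_cast; ring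
      have e3 : m + 1 - j = i := by omega
      rw [e1, e2, e3, R_pred hq, R_pred hq, hi, pow_add]
      ring
    apply mul_left_cancel₀ (one_sub_pow_ne hq m)
    rw [Finset.mul_sum, Finset.sum_congr rfl key, Finset.sum_add_distrib, Finset.sum_range_succ,
      ih N, Finset.sum_range_succ']
    have h0 : R q ((m : ℤ) - ((m + 1 : ℕ) : ℤ)) = 0 := R_neg q (by push_cast; omega)
    have h1 : R q (((0 : ℕ) : ℤ) - 1) = 0 := R_neg q (by simp)
    rw [h0, h1]
    have h2 : ∑ j ∈ Finset.range (m + 1), q ^ (m + 1 - (j + 1)) * q ^ ((j + 1) * (j + 1 + N)) *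
            (R q (((m + 1 : ℕ) : ℤ) - ((j + 1 : ℕ) : ℤ)) * R q (((j + 1 : ℕ) : ℤ) - 1) *
              R q (((j + 1 : ℕ) : ℤ) + N)) = q ^ (m + N + 1) * (R q m * R q ((m : ℤ) + (N + 1 : ℕ))) := by
      rw [← ih (N + 1), Finset.mul_sum]
      refine Finset.sum_congr rfl fun j hj => ?_
      have hj' : j ≤ m := by simp at hj; omega
      obtain ⟨i, hi⟩ := Nat.exists_eq_add_of_le hj'
      have e3 : m + 1 - (j + 1) = i := by omega
      rw [e3]
      have e4 : (((m + 1 : ℕ) : ℤ) - ((j + 1 : ℕ) : ℤ)) = (m : ℤ) - j := by push_cast; ring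
      have e5 : (((j + 1 : ℕ) : ℤ) - 1) = j := by push_cast; ring
      have e6 : (((j + 1 : ℕ) : ℤ) + N) = (j : ℤ) + (N + 1 : ℕ) := by push_cast; ring
      have e7 : q ^ i * q ^ ((j + 1) * (j + 1 + N))
          = q ^ (m + N + 1) * q ^ (j * (j + (N + 1))) := by
        rw [← pow_add, ← pow_add]; congr 1; rw [hi]; ring
      rw [e4, e5, e6, e7]
      ring
    rw [h2]
    have h3 := R_succ hq m
    have h4 := R_succ hq (m + N)
    push_cast at h3 h4 ⊢
    rw [show (m : ℤ) + 1 + N = m + N + 1 by ring, show (m : ℤ) + (N + 1) = m + N + 1 by ring,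
      h4, h3]
    ring

lemma ch (j : ℕ) : (j + 2).choose 2 = (j + 1).choose 2 + (j + 1) := by
  rw [Nat.choose_succ_succ' (j + 1) 1]; simp; ring

lemma ch' (j : ℕ) : (j + 1).choose 2 = j.choose 2 + j := by
  rw [Nat.choose_succ_succ' j 1]; simp; ring

lemma ch_add (a b : ℕ) : (a + b + 1).choose 2 = (a + 1).choose 2 + (b + 1).choose 2 + a * b := by
  induction b with
  | zero => simp
  | succ b ih => 
    rw [show a + (b + 1) + 1 = a + b + 2 by ring, ch, ih, ch]; ring

/-- Second summation. -/
lemma V2 {q : ℂ} (hq : ‖q‖ < 1) (b m : ℕ) : ∀ c : ℕ,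
    ∑ j ∈ Finset.range (m + 1), q ^ ((j + 1).choose 2 + b * j) * qPoch (-q ^ (c + 1)) q j *
      (R q ((m : ℤ) - j) * R q j * R q ((j : ℤ) + (b + 1 + c : ℕ)))
      = R q m * qPoch (-q ^ (b + 1)) q m * R q ((m : ℤ) + (b + 1 + c : ℕ)) := by
  induction m with
  | zero => intro c; simp
  | succ m ih =>
    intro c
    have key : ∀ j ∈ Finset.range (m + 2), (1 - q ^ (m + 1)) *
        (q ^ ((j + 1).choose 2 + b * j) * qPoch (-q ^ (c + 1)) q j *
      (R q (((m + 1 : ℕ) : ℤ) - j) * R q j * R q ((j : ℤ) + (b + 1 + c : ℕ))))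
        = q ^ ((j + 1).choose 2 + b * j) * qPoch (-q ^ (c + 1)) q j *
      (R q ((m : ℤ) - j) * R q j * R q ((j : ℤ) + (b + 1 + c : ℕ))) +
          q ^ (m + 1 - j) * (q ^ ((j + 1).choose 2 + b * j) * qPoch (-q ^ (c + 1)) q j *
      (R q (((m + 1 : ℕ) : ℤ) - j) * R q ((j : ℤ) - 1) * R q ((j : ℤ) + (b + 1 + c : ℕ)))) := by
      intro j hj
      have hj' : j ≤ m + 1 := by simp at hj; omega
      obtain ⟨i, hi⟩ := Nat.exists_eq_add_of_le hj'
      have e1 : (((m + 1 : ℕ) : ℤ) - j) = (i : ℤ) := by rw [hi]; push_cast; ring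
      have e2 : ((m : ℤ) - j) = (i : ℤ) - 1 := by rw [← e1]; push_cast; ring
      have e3 : m + 1 - j = i := by omega
      rw [e1, e2, e3, R_pred hq, R_pred hq, hi, pow_add q j i]
      ring
    apply mul_left_cancel₀ (one_sub_pow_ne hq m)
    rw [Finset.mul_sum, Finset.sum_congr rfl key, Finset.sum_add_distrib, Finset.sum_range_succ,
      ih c, Finset.sum_range_succ']
    have h0 : R q ((m : ℤ) - ((m + 1 : ℕ) : ℤ)) = 0 := R_neg q (by push_cast; omega)
    have h1 : R q (((0 : ℕ) : ℤ) - 1) = 0 := R_neg q (by simp)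
    rw [h0, h1]
    have h2 : ∑ j ∈ Finset.range (m + 1), q ^ (m + 1 - (j + 1)) *
        (q ^ ((j + 1 + 1).choose 2 + b * (j + 1)) * qPoch (-q ^ (c + 1)) q (j + 1) *
      (R q (((m + 1 : ℕ) : ℤ) - ((j + 1 : ℕ) : ℤ)) * R q (((j + 1 : ℕ) : ℤ) - 1) *
        R q (((j + 1 : ℕ) : ℤ) + (b + 1 + c : ℕ))))
         = q ^ (m + b + 1) * (1 + q ^ (c + 1)) *
          (R q m * qPoch (-q ^ (b + 1)) q m * R q ((m : ℤ) + (b + 1 + (c + 1) : ℕ))) := by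
      rw [← ih (c + 1), Finset.mul_sum]
      refine Finset.sum_congr rfl fun j hj => ?_
      have hj' : j ≤ m := by simp at hj; omega
      obtain ⟨i, hi⟩ := Nat.exists_eq_add_of_le hj'
      have e3 : m + 1 - (j + 1) = i := by omega
      rw [e3]
      have e4 : (((m + 1 : ℕ) : ℤ) - ((j + 1 : ℕ) : ℤ)) = (m : ℤ) - j := by push_cast; ring
      have e5 : (((j + 1 : ℕ) : ℤ) - 1) = j := by push_cast; ring
      have e6 : (((j + 1 : ℕ) : ℤ) + (b + 1 + c : ℕ)) = (j : ℤ) + (b + 1 + (c + 1) : ℕ) := by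
        push_cast; ring
      have e7 : q ^ i * q ^ ((j + 1 + 1).choose 2 + b * (j + 1))
          = q ^ (m + b + 1) * q ^ ((j + 1).choose 2 + b * j) := by
        rw [ch, ← pow_add, ← pow_add]; congr 1; rw [hi]; ring
      rw [e4, e5, e6, qPoch_succ', show -q ^ (c + 1) * q = - q ^ (c + 1 + 1) by ring]
      linear_combination ((1 - -q ^ (c + 1)) * qPoch (-q ^ (c + 1 + 1)) q j *
        (R q (m - j) * R q j * R q ((j : ℤ) + (b + 1 + (c + 1) : ℕ)))) * e7
    rw [h2]
    have h3 := R_succ hq m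
    have h4 := R_succ hq (m + (b + 1 + c))
    rw [qPoch_succ (-q ^ (b + 1)) q m]
    push_cast at h3 h4 ⊢
    rw [show (m : ℤ) + 1 + (b + 1 + c) = m + (b + 1 + c) + 1 by ring,
      show (m : ℤ) + (b + 1 + (c + 1)) = m + (b + 1 + c) + 1 by ring,
      h4, h3]
    ring

/-- Bailey transform sum. -/
noncomputable def bet (q : ℂ) (a : ℕ → ℂ) (n : ℕ) : ℂ :=
  ∑ r ∈ Finset.range (n + 1), a r * (R q ((n : ℤ) - r) * R q ((n : ℤ) + r + 1))

lemma bet_ext (q : ℂ) (a : ℕ → ℂ) {n m : ℕ} (h : n ≤ m) :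
    bet q a n = ∑ r ∈ Finset.range (m + 1), a r * (R q ((n : ℤ) - r) * R q ((n : ℤ) + r + 1)) := by
  refine Finset.sum_subset (by intro x; simp; omega) fun x _ hx => ?_
  rw [R_neg q (j := (n : ℤ) - x)]
  · simp
  · simp at hx; omega

lemma bailey_gen {q : ℂ} (f g h : ℕ → ℂ) (a : ℕ → ℂ) (n : ℕ)
    (H : ∀ s m, s + m = n → ∑ j ∈ Finset.range (m + 1), f (s + j) * (R q ((m : ℤ) - j) * R q j *
      R q ((j : ℤ) + (2 * s + 1 : ℕ))) = g s * (R q m * R q ((m : ℤ) + (2 * s + 1 : ℕ))) * h n) :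
    ∑ r ∈ Finset.range (n + 1), f r * R q ((n : ℤ) - r) * bet q a r
      = h n * bet q (fun r => g r * a r) n := by
  have h1 : ∀ r ∈ Finset.range (n + 1), f r * R q ((n : ℤ) - r) * bet q a r
      = ∑ s ∈ Finset.range (n + 1), a s * (f r * (R q ((n : ℤ) - r) * R q ((r : ℤ) - s) *
        R q ((r : ℤ) + s + 1))) := by
    intro r hr
    rw [bet_ext q a (m := n) (by simp at hr; omega), Finset.mul_sum]
    refine Finset.sum_congr rfl fun s _ => ?_
    ring
  rw [Finset.sum_congr rfl h1, Finset.sum_comm, bet, Finset.mul_sum]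
  refine Finset.sum_congr rfl fun s hs => ?_
  obtain ⟨m, hm⟩ := Nat.exists_eq_add_of_le (show s ≤ n by simp at hs; omega)
  have := H s m hm.symm
  rw [← Finset.mul_sum, hm, add_assoc, Finset.sum_range_add, Finset.sum_eq_zero, zero_add]
  · have h2 : ∀ j ∈ Finset.range (m + 1), f (s + j) * (R q (((s + m : ℕ) : ℤ) - (s + j : ℕ)) *
        R q (((s + j : ℕ) : ℤ) - s) * R q (((s + j : ℕ) : ℤ) + s + 1))
        = f (s + j) * (R q ((m : ℤ) - j) * R q j * R q ((j : ℤ) + (2 * s + 1 : ℕ))) := by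
      intro j _
      rw [show (((s + m : ℕ) : ℤ) - (s + j : ℕ)) = (m : ℤ) - j by push_cast; ring,
        show (((s + j : ℕ) : ℤ) - s) = j by push_cast; ring,
        show (((s + j : ℕ) : ℤ) + s + 1) = (j : ℤ) + (2 * s + 1 : ℕ) by push_cast; ring]
    rw [Finset.sum_congr rfl h2, this, hm]
    rw [show (((s + m : ℕ) : ℤ) - s) = m by push_cast; ring,
      show (((s + m : ℕ) : ℤ) + s + 1) = (m : ℤ) + (2 * s + 1 : ℕ) by push_cast; ring]
    ring
  · intro r hr
    rw [R_neg q (j := (r : ℤ) - s)]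
    · simp
    · simp at hr; omega

lemma bailey1 {q : ℂ} (hq : ‖q‖ < 1) (a : ℕ → ℂ) (n : ℕ) :
    ∑ r ∈ Finset.range (n + 1), q ^ (r ^ 2 + r) * R q ((n : ℤ) - r) * bet q a r
      = bet q (fun r => q ^ (r ^ 2 + r) * a r) n := by
  have := bailey_gen (q := q) (fun r => q ^ (r ^ 2 + r)) (fun r => q ^ (r ^ 2 + r)) (fun _ => 1)
    a n ?_
  · simpa using this
  · intro s m _
    rw [← V1 hq m (2 * s + 1), mul_one, Finset.mul_sum]
    refine Finset.sum_congr rfl fun j _ => ?_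
    rw [← mul_assoc (q ^ _) (q ^ _), ← pow_add]
    congr 2
    ring

lemma bailey2 {q : ℂ} (hq : ‖q‖ < 1) (a : ℕ → ℂ) (n : ℕ) :
    ∑ r ∈ Finset.range (n + 1), (q ^ ((r + 1).choose 2) * qPoch (-q) q r) * R q ((n : ℤ) - r) *
      bet q a r
      = qPoch (-q) q n * bet q (fun r => q ^ ((r + 1).choose 2) * a r) n := by
  refine bailey_gen (q := q) _ (fun r => q ^ ((r + 1).choose 2)) (fun n => qPoch (-q) q n)
    a n ?_
  intro s m hm
  have := V2 hq s m s
  rw [← hm, qPoch_add, show -q * q ^ s = -q ^ (s + 1) by ring]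
  have e : s + 1 + s = 2 * s + 1 := by ring
  rw [e] at this
  calc _ = q ^ ((s + 1).choose 2) * qPoch (-q) q s * _ := ?_
    _ = q ^ ((s + 1).choose 2) * qPoch (-q) q s * _ := congrArg _ this
    _ = _ := by ring
  rw [Finset.mul_sum]
  refine Finset.sum_congr rfl fun j _ => ?_
  rw [ch_add, qPoch_add, show -q * q ^ s = -q ^ (s + 1) by ring]
  ring

/-- unit Bailey pair -/
lemma unit_pair {q : ℂ} (hq : ‖q‖ < 1) (n : ℕ) :
    bet q (fun r => (-1) ^ r * q ^ (r.choose 2) * (1 - q ^ (2 * r + 1))) n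
      = if n = 0 then 1 else 0 := by
  rcases n with _ | n
  · have := R_succ hq 0
    simp at this
    simp [bet, ← this]
  · have key : ∀ m, m ≤ n + 2 → (1 - q ^ (n + 1)) * ∑ r ∈ Finset.range m,
      (-1) ^ r * q ^ (r.choose 2) * (1 - q ^ (2 * r + 1)) *
        (R q (((n + 1 : ℕ) : ℤ) - r) * R q (((n + 1 : ℕ) : ℤ) + r + 1)) =
      -((1 - q ^ m) * (-1) ^ m * q ^ (m.choose 2) * R q (((n + 1 : ℕ) : ℤ) - m) *
        R q (((n + 1 : ℕ) : ℤ) + m)) := by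
      intro m
      induction m with
      | zero => simp
      | succ m ih =>
        intro hm
        obtain ⟨i, hi⟩ := Nat.exists_eq_add_of_le (show m ≤ n + 1 by omega)
        rw [Finset.sum_range_succ, mul_add, ih (by omega), ch']
        have h1 := R_pred hq i
        have h2 := R_succ hq (n + 1 + m)
        rw [show (((n + 1 : ℕ) : ℤ) - (m + 1 : ℕ)) = (i : ℤ) - 1 by rw [hi]; push_cast; ring,
          show (((n + 1 : ℕ) : ℤ) - m) = (i : ℤ) by rw [hi]; push_cast; ring,
          show (((n + 1 : ℕ) : ℤ) + (m + 1 : ℕ)) = ((n + 1 + m : ℕ) : ℤ) + 1 by push_cast; ring,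
          show (((n + 1 : ℕ) : ℤ) + m + 1) = ((n + 1 + m : ℕ) : ℤ) + 1 by push_cast; ring,
          show (((n + 1 : ℕ) : ℤ) + m) = ((n + 1 + m : ℕ) : ℤ) by push_cast; ring, h1, h2]
        rw [hi]
        ring
    have := key (n + 2) le_rfl
    rw [R_neg q (j := ((n + 1 : ℕ) : ℤ) - (n + 2 : ℕ)) (by push_cast; omega)] at this
    simp only [mul_zero, zero_mul, neg_zero, mul_eq_zero, one_sub_pow_ne hq n, false_or] at this
    simp only [bet]
    rw [this]; simp

/-- The sequence `α` at level `k+1`. -/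
noncomputable def alp (q : ℂ) : ℕ → ℕ → ℂ
  | 0 => fun r => q ^ ((r + 1).choose 2) * ((-1) ^ r * q ^ (r.choose 2) * (1 - q ^ (2 * r + 1)))
  | k + 1 => fun r => q ^ (r ^ 2 + r) * alp q k r

lemma qPoch_neg_ne {q : ℂ} (hq : ‖q‖ < 1) (n : ℕ) : qPoch (-q) q n ≠ 0 := by
  rw [qPoch, Finset.prod_ne_zero_iff]
  intro i _ h
  have h1 : q ^ (i + 1) = -1 := by linear_combination h
  have h2 : ‖q‖ ^ (i + 1) < 1 := pow_lt_one₀ (norm_nonneg _) hq (by omega)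
  rw [← norm_pow, h1] at h2
  simp at h2

lemma base_pair {q : ℂ} (hq : ‖q‖ < 1) (n : ℕ) :
    bet q (alp q 0) n = (qPoch (-q) q n)⁻¹ * R q n := by
  have := bailey2 hq (fun r => (-1) ^ r * q ^ (r.choose 2) * (1 - q ^ (2 * r + 1))) n
  simp only [unit_pair hq] at this
  rw [Finset.sum_range_succ'] at this
  simp at this
  rw [this, ← mul_assoc, inv_mul_cancel₀ (qPoch_neg_ne hq n), one_mul]
  rfl

end RR

namespace RR

open Filter Topology

/-- theta coefficients -/
noncomputable def cc (z w Q : ℂ) : ℤ → ℂ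
  | Int.ofNat n => (-w) ^ n * Q ^ (n.choose 2)
  | Int.negSucc n => (-z) ^ (n + 1) * Q ^ ((n + 1).choose 2)

lemma cc_nat (z w Q : ℂ) (n : ℕ) : cc z w Q (n : ℤ) = (-w) ^ n * Q ^ (n.choose 2) := rfl

lemma cc_neg (z w Q : ℂ) (n : ℕ) :
    cc z w Q (-((n : ℤ) + 1)) = (-z) ^ (n + 1) * Q ^ ((n + 1).choose 2) := by
  rw [← Int.negSucc_eq]; rfl

lemma cc_symm (z w Q : ℂ) (s : ℤ) : cc z w Q (-s) = cc w z Q s := by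
  rcases s with n | n
  · rcases n with _ | n
    · simp [cc]
    · have := cc_neg z w Q n
      simp only [Int.ofNat_eq_natCast, cc_nat]
      push_cast
      exact this
  · rw [Int.neg_negSucc]; rfl

lemma cc_rel (z w Q : ℂ) (h : z * w = Q) (m i : ℕ) (s : ℤ) (hi : (i : ℤ) = m + 1 - s) :
    Q ^ i * cc z w Q s = -w * Q ^ m * cc z w Q (s - 1) := by
  rcases s with n | n
  · rcases n with _ | n
    · have e : i = m + 1 := by simp at hi; omega
      have := cc_neg z w Q 0
      simp at this
      simp only [Int.ofNat_eq_natCast, cc_nat]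
      simp only [Nat.cast_zero, zero_sub, this, e, show Nat.choose 0 2 = 0 from rfl]
      linear_combination (-(Q ^ m)) * h
    · have e : m = i + n := by simp at hi; omega
      simp only [Int.ofNat_eq_natCast, cc_nat]
      rw [show ((n + 1 : ℕ) : ℤ) - 1 = (n : ℤ) by push_cast; ring, cc_nat, ch', e]
      ring
  · have e : i = m + 2 + n := by rw [Int.negSucc_eq] at hi; omega
    rw [show Int.negSucc n - 1 = -(((n + 1 : ℕ) : ℤ) + 1) by
      rw [Int.negSucc_eq]; push_cast; ring, cc_neg, Int.negSucc_eq, cc_neg, ch' (n + 1), e]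
    have : Q ^ (m + 2 + n) = Q ^ (m + n + 1) * (z * w) := by rw [h]; ring
    rw [this]
    ring

/-- finite theta sum -/
noncomputable def GG (z w Q : ℂ) (m n : ℕ) : ℂ :=
  ∑' s : ℤ, cc z w Q s * (R Q ((m : ℤ) - s) * R Q ((n : ℤ) + s))

lemma GG_summable (z w Q : ℂ) (m n : ℕ) :
    Summable fun s : ℤ => cc z w Q s * (R Q ((m : ℤ) - s) * R Q ((n : ℤ) + s)) := by
  refine summable_of_ne_finset_zero (s := Finset.Icc (-(n : ℤ)) m) fun s hs => ?_
  simp only [Finset.mem_Icc, not_and_or, not_le] at hs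
  rcases hs with hs | hs
  · rw [R_neg Q (j := (n : ℤ) + s) (by omega)]; simp
  · rw [R_neg Q (j := (m : ℤ) - s) (by omega)]; simp

lemma GG_symm (z w Q : ℂ) (m n : ℕ) : GG z w Q m n = GG w z Q n m := by
  rw [GG, ← (Equiv.neg ℤ).tsum_eq]
  refine tsum_congr fun s => ?_
  simp only [Equiv.neg_apply, cc_symm, sub_neg_eq_add, ← sub_eq_add_neg]
  ring

lemma GG_zero (z w Q : ℂ) : GG z w Q 0 0 = 1 := by
  rw [GG, tsum_eq_single 0]
  · have : cc z w Q 0 = 1 := by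
      have := cc_nat z w Q 0
      simpa using this
    simp [this]
  · intro s hs
    rcases lt_or_gt_of_ne hs with h | h
    · rw [R_neg Q (j := ((0 : ℕ) : ℤ) + s) (by simpa using h)]; simp
    · rw [R_neg Q (j := ((0 : ℕ) : ℤ) - s) (by simpa using h)]; simp

lemma GG_step {z w Q : ℂ} (hQ : ‖Q‖ < 1) (h : z * w = Q) (m n : ℕ) :
    (1 - Q ^ (m + n + 1)) * GG z w Q (m + 1) n = (1 - w * Q ^ m) * GG z w Q m n := by
  have key : ∀ s : ℤ, (1 - Q ^ (m + n + 1)) *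
      (cc z w Q s * (R Q (((m + 1 : ℕ) : ℤ) - s) * R Q ((n : ℤ) + s)))
      = cc z w Q s * (R Q ((m : ℤ) - s) * R Q ((n : ℤ) + s)) +
        (-w * Q ^ m) * (cc z w Q (s - 1) * (R Q ((m : ℤ) - (s - 1)) * R Q ((n : ℤ) + (s - 1)))) := by
    intro s
    rcases lt_or_ge ((m : ℤ) + 1 - s) 0 with h1 | h1
    · rw [R_neg Q (j := ((m + 1 : ℕ) : ℤ) - s) (by push_cast; omega),
        R_neg Q (j := (m : ℤ) - s) (by omega), R_neg Q (j := (m : ℤ) - (s - 1)) (by omega)]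
      simp
    rcases lt_or_ge ((n : ℤ) + s) 0 with h2 | h2
    · rw [R_neg Q (j := (n : ℤ) + s) (by omega), R_neg Q (j := (n : ℤ) + (s - 1)) (by omega)]
      simp
    obtain ⟨i, hi⟩ := Int.eq_ofNat_of_zero_le h1
    obtain ⟨j, hj⟩ := Int.eq_ofNat_of_zero_le h2
    have hc := cc_rel z w Q h m i s hi.symm
    rw [show ((m + 1 : ℕ) : ℤ) - s = i by rw [← hi]; push_cast; ring,
      show (m : ℤ) - s = (i : ℤ) - 1 by rw [← hi]; ring,
      show (m : ℤ) - (s - 1) = (i : ℤ) by rw [← hi]; ring,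
      show (n : ℤ) + (s - 1) = (j : ℤ) - 1 by rw [← hj]; ring, hj, R_pred hQ, R_pred hQ,
      show m + n + 1 = i + j by omega, pow_add]
    linear_combination (R Q i * ((1 - Q ^ j) * R Q j)) * hc
  have hs := GG_summable z w Q m n
  have e := (Equiv.subRight (1 : ℤ)).tsum_eq
    (fun s : ℤ => cc z w Q s * (R Q ((m : ℤ) - s) * R Q ((n : ℤ) + s)))
  have hs' := (Equiv.subRight (1 : ℤ)).summable_iff.mpr hs
  simp only [Equiv.subRight_apply] at e
  simp only [Function.comp_def, Equiv.subRight_apply] at hs'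
  rw [GG, ← tsum_mul_left, tsum_congr key, hs.tsum_add (hs'.mul_left _), tsum_mul_left, e, GG]
  ring

lemma GG_ind {z w Q : ℂ} (hQ : ‖Q‖ < 1) (h : z * w = Q) (n : ℕ)
    (h0 : GG z w Q 0 n = qPoch z Q n * R Q n) (m : ℕ) :
    GG z w Q m n = qPoch w Q m * qPoch z Q n * R Q ((m + n : ℕ) : ℤ) := by
  induction m with
  | zero => simp [h0]
  | succ m ih =>
    apply mul_left_cancel₀ (one_sub_pow_ne hQ (m + n))
    rw [GG_step hQ h, ih, qPoch_succ, R_succ hQ]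
    push_cast
    rw [show (m : ℤ) + 1 + n = m + n + 1 by ring]
    ring

lemma GG_eq {z w Q : ℂ} (hQ : ‖Q‖ < 1) (h : z * w = Q) (m n : ℕ) :
    GG z w Q m n = qPoch w Q m * qPoch z Q n * R Q ((m + n : ℕ) : ℤ) := by
  refine GG_ind hQ h n ?_ m
  rw [GG_symm, GG_ind hQ (by rw [mul_comm, h]) 0 (by simp [GG_zero])]
  simp

/-- paired coefficients -/
noncomputable def dd (z w Q : ℂ) (s : ℕ) : ℂ :=
  (-w) ^ s * Q ^ (s.choose 2) + (-z) ^ (s + 1) * Q ^ ((s + 1).choose 2)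

lemma bet_tsum (q : ℂ) (a : ℕ → ℂ) (n : ℕ) :
    bet q a n = ∑' r : ℕ, a r * (R q ((n : ℤ) - r) * R q ((n : ℤ) + r + 1)) := by
  rw [tsum_eq_sum (s := Finset.range (n + 1)), bet]
  intro r hr
  rw [R_neg q (j := (n : ℤ) - r) (by simp at hr; omega)]; simp

lemma bet_dd {z w Q : ℂ} (hQ : ‖Q‖ < 1) (h : z * w = Q) (M : ℕ) :
    bet Q (dd z w Q) M = qPoch w Q M * qPoch z Q (M + 1) * R Q ((M + (M + 1) : ℕ) : ℤ) := by
  rw [← GG_eq hQ h, bet_tsum, GG]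
  have hs := GG_summable z w Q M (M + 1)
  obtain ⟨F, hF⟩ : ∃ F : ℤ → ℂ, F = fun s : ℤ => cc z w Q s *
    (R Q ((M : ℤ) - s) * R Q (((M + 1 : ℕ) : ℤ) + s)) := ⟨_, rfl⟩
  rw [← hF] at hs ⊢
  have h1 : Summable fun n : ℕ => F (n : ℤ) := hs.comp_injective Nat.cast_injective
  have h2 : Summable fun n : ℕ => F (-((n : ℤ) + 1)) :=
    hs.comp_injective (i := fun n : ℕ => (-((n : ℤ) + 1))) (by intro a b; simp)
  rw [tsum_of_nat_of_neg_add_one h1 h2, ← h1.tsum_add h2]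
  refine tsum_congr fun s => ?_
  rw [hF]
  simp only
  rw [cc_nat, cc_neg, dd,
    show (M : ℤ) - -((s : ℤ) + 1) = M + s + 1 by ring,
    show ((M + 1 : ℕ) : ℤ) + -((s : ℤ) + 1) = M - s by push_cast; ring,
    show ((M + 1 : ℕ) : ℤ) + s = M + s + 1 by push_cast; ring]
  ring

lemma summable_geo {p : ℂ} (hp : ‖p‖ < 1) (x : ℂ) : Summable fun k : ℕ => ‖-(x * p ^ k)‖ := by
  simp only [norm_neg, norm_mul, norm_pow]
  exact (summable_geometric_of_lt_one (norm_nonneg _) hp).mul_left _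

lemma tendsto_qPoch {p : ℂ} (hp : ‖p‖ < 1) (x : ℂ) :
    Tendsto (qPoch x p) atTop (𝓝 (qPochInf x p)) := by
  have := (multipliable_one_add_of_summable (summable_geo hp x)).tendsto_prod_tprod_nat
  simp only [← sub_eq_add_neg] at this
  exact this

lemma qPochInf_ne {p : ℂ} (hp : ‖p‖ < 1) : qPochInf p p ≠ 0 := by
  have := tprod_one_add_ne_zero_of_summable (f := fun k : ℕ => -(p * p ^ k)) ?_
    (summable_geo hp p)
  · simp only [← sub_eq_add_neg] at this
    exact this
  · intro i
    rw [← sub_eq_add_neg, ← pow_succ']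
    exact one_sub_pow_ne hp i

lemma qPochInf_neg_ne {p : ℂ} (hp : ‖p‖ < 1) : qPochInf (-p) p ≠ 0 := by
  have := tprod_one_add_ne_zero_of_summable (f := fun k : ℕ => -(-p * p ^ k)) ?_
    (summable_geo hp (-p))
  · simp only [← sub_eq_add_neg] at this
    exact this
  · intro i
    have := qPoch_neg_ne hp (i + 1)
    rw [qPoch_succ] at this
    simpa only [← sub_eq_add_neg] using right_ne_zero_of_mul this

lemma tendsto_R {p : ℂ} (hp : ‖p‖ < 1) : Tendsto (R p) atTop (𝓝 (qPochInf p p)⁻¹) := by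
  have h1 := ((tendsto_qPoch hp p).inv₀ (qPochInf_ne hp))
  have h2 : Tendsto (fun j : ℤ => j.toNat) atTop atTop :=
    tendsto_atTop.mpr fun b => (eventually_ge_atTop (b : ℤ)).mono fun j hj => by omega
  refine (h1.comp h2).congr' ?_
  filter_upwards [eventually_ge_atTop (0 : ℤ)] with j hj
  simp [R, not_lt.mpr hj]

lemma bdd_of_tendsto {f : ℕ → ℂ} {a : ℂ} (h : Tendsto f atTop (𝓝 a)) :
    ∃ C, 0 < C ∧ ∀ n, ‖f n‖ ≤ C := by
  obtain ⟨C, hC⟩ := h.norm.bddAbove_range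
  exact ⟨max C 1, by positivity, fun n => le_max_of_le_left (hC ⟨n, rfl⟩)⟩

lemma R_bdd {p : ℂ} (hp : ‖p‖ < 1) : ∃ C, 0 < C ∧ ∀ j, ‖R p j‖ ≤ C := by
  obtain ⟨C, h0, hC⟩ := bdd_of_tendsto ((tendsto_R hp).comp tendsto_natCast_atTop_atTop)
  refine ⟨C, h0, fun j => ?_⟩
  rcases lt_or_ge j 0 with h | h
  · rw [R_neg p h]; simpa using h0.le
  · obtain ⟨n, rfl⟩ := Int.eq_ofNat_of_zero_le h
    exact hC n

lemma lim_gen {d : ℕ → ℂ} (hd : Summable fun s => ‖d s‖) {g : ℕ → ℕ → ℂ} {a : ℂ} {C : ℝ}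
    (hb : ∀ M s, ‖g M s‖ ≤ C) (hl : ∀ s, Tendsto (fun M => g M s) atTop (𝓝 a)) :
    Tendsto (fun M => ∑' s, d s * g M s) atTop (𝓝 ((∑' s, d s) * a)) := by
  rw [← tsum_mul_right]
  refine tendsto_tsum_of_dominated_convergence (bound := fun s => ‖d s‖ * C) (hd.mul_right C)
    (fun s => (hl s).const_mul _) (Eventually.of_forall fun M s => ?_)
  rw [norm_mul]
  exact mul_le_mul_of_nonneg_left (hb M s) (norm_nonneg _)

lemma shift1 (r : ℕ) : Tendsto (fun M : ℕ => (M : ℤ) - r) atTop atTop :=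
  tendsto_atTop_add_const_right _ _ tendsto_natCast_atTop_atTop

lemma shift2 (r : ℕ) : Tendsto (fun M : ℕ => (M : ℤ) + r + 1) atTop atTop :=
  tendsto_atTop_add_const_right _ _ (tendsto_atTop_add_const_right _ _ tendsto_natCast_atTop_atTop)

lemma bet_lim {p : ℂ} (hp : ‖p‖ < 1) {d : ℕ → ℂ} (hd : Summable fun s => ‖d s‖) :
    Tendsto (bet p d) atTop (𝓝 ((∑' s, d s) * ((qPochInf p p)⁻¹ * (qPochInf p p)⁻¹))) := by
  obtain ⟨C, h0, hC⟩ := R_bdd hp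
  have := lim_gen hd (g := fun M r => R p ((M : ℤ) - r) * R p ((M : ℤ) + r + 1)) (C := C * C)
    (a := (qPochInf p p)⁻¹ * (qPochInf p p)⁻¹) ?_ ?_
  · refine this.congr fun M => (bet_tsum p d M).symm
  · intro M s
    rw [norm_mul]
    exact mul_le_mul (hC _) (hC _) (norm_nonneg _) h0.le
  · intro s
    exact ((tendsto_R hp).comp (shift1 s)).mul ((tendsto_R hp).comp (shift2 s))

lemma dd_summable {z w Q : ℂ} (hQ : ‖Q‖ < 1) (hz : ‖z‖ < 1) (hw : ‖w‖ < 1) :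
    Summable fun s => ‖dd z w Q s‖ := by
  have h1 := summable_geometric_of_lt_one (norm_nonneg _) hz
  have h2 := summable_geometric_of_lt_one (norm_nonneg _) hw
  refine Summable.of_nonneg_of_le (fun _ => norm_nonneg _) (fun s => ?_) (h2.add h1)
  refine (norm_add_le _ _).trans (add_le_add ?_ ?_)
  · rw [norm_mul, norm_pow, norm_pow, norm_neg]
    exact mul_le_of_le_one_right (by positivity) (pow_le_one₀ (norm_nonneg _) hQ.le)
  · rw [norm_mul, norm_pow, norm_pow, norm_neg]
    exact (mul_le_of_le_one_right (by positivity) (pow_le_one₀ (norm_nonneg _) hQ.le)).trans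
      (pow_le_pow_of_le_one (norm_nonneg _) hz.le (by omega))

/-- Jacobi triple product. -/
lemma jtp {z w Q : ℂ} (hQ : ‖Q‖ < 1) (hz : ‖z‖ < 1) (hw : ‖w‖ < 1) (h : z * w = Q) :
    ∑' s, dd z w Q s = qPochInf Q Q * qPochInf w Q * qPochInf z Q := by
  have h1 := bet_lim hQ (dd_summable hQ hz hw)
  have h2 : Tendsto (bet Q (dd z w Q)) atTop
      (𝓝 (qPochInf w Q * qPochInf z Q * (qPochInf Q Q)⁻¹)) := by
    have h3 : Tendsto (fun M : ℕ => ((M + (M + 1) : ℕ) : ℤ)) atTop atTop :=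
      tendsto_natCast_atTop_atTop.comp (tendsto_atTop_mono (fun M => by simp only [id]; omega) tendsto_id)
    refine Tendsto.congr (fun M => (bet_dd hQ h M).symm) ?_
    exact ((tendsto_qPoch hQ w).mul ((tendsto_qPoch hQ z).comp (tendsto_add_atTop_nat 1))).mul
      ((tendsto_R hQ).comp h3)
  have h4 := tendsto_nhds_unique h1 h2
  have h5 := qPochInf_ne hQ
  field_simp at h4
  rw [h4]

end RR

namespace RR

open Filter Topology

/-- Partitions with fixed largest part. -/
abbrev EE (k n : ℕ) : Type := {l : PartK k // l.1 0 = n}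

/-- Prepend a part. -/
def consP (k n : ℕ) (μ : PartK k) (h : μ.1 0 ≤ n) : PartK (k + 1) :=
  ⟨fun i => Nat.casesOn i n μ.1, by
    refine ⟨antitone_nat_of_succ_le fun i => ?_, fun i hi => ?_⟩
    · cases i with
      | zero => exact h
      | succ i => exact μ.2.1 (Nat.le_succ i)
    · cases i with
      | zero => omega
      | succ i => exact μ.2.2 i (by omega)⟩

/-- Remove the largest part. -/
def tailP (k : ℕ) (l : PartK (k + 1)) : PartK k :=
  ⟨fun i => l.1 (i + 1), fun _ _ h => l.2.1 (Nat.succ_le_succ h),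
    fun i hi => l.2.2 (i + 1) (by omega)⟩

/-- Decomposition by second largest part. -/
def stepEquiv (k n : ℕ) : EE (k + 1) n ≃ Σ r : Fin (n + 1), EE k r where
  toFun l := ⟨⟨l.1.1 1, by
    have := l.1.2.1 (Nat.zero_le 1); have := l.2; omega⟩, ⟨tailP k l.1, rfl⟩⟩
  invFun p := ⟨consP k n p.2.1 (by have := p.2.2; have := p.1.2; omega), rfl⟩
  left_inv l := by
    apply Subtype.ext
    apply Subtype.ext
    funext i
    cases i with
    | zero => exact l.2.symm
    | succ i => rfl
  right_inv p := by
    rcases p with ⟨⟨r, hr⟩, ⟨μ, hμ⟩⟩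
    simp only at hμ
    subst hμ
    rfl

/-- one row -/
def oneEquiv (n : ℕ) : EE 1 n ≃ Unit where
  toFun _ := ()
  invFun _ := ⟨consP 0 n ⟨fun _ => 0, fun _ _ _ => le_rfl, fun _ _ => rfl⟩ (Nat.zero_le _), rfl⟩
  left_inv l := by
    apply Subtype.ext
    apply Subtype.ext
    funext i
    cases i with
    | zero => exact l.2.symm
    | succ i => exact (l.1.2.2 (i + 1) (by omega)).symm
  right_inv _ := rfl

/-- finiteness -/
noncomputable instance fintypeEE : ∀ k n : ℕ, Fintype (EE (k + 1) n)
  | 0, n => Fintype.ofEquiv Unit (oneEquiv n).symm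
  | k + 1, n =>
    haveI : ∀ r : Fin (n + 1), Fintype (EE (k + 1) r) := fun r => fintypeEE k r
    Fintype.ofEquiv (Σ r : Fin (n + 1), EE (k + 1) r) (stepEquiv (k + 1) n).symm

/-- weight of a partition, without the factors depending on the largest part only -/
noncomputable def ww (q : ℂ) (k : ℕ) (l : PartK (k + 1)) : ℂ :=
  q ^ (∑ i ∈ Finset.range k, (l.1 (i + 1) ^ 2 + l.1 (i + 1))) *
    ((qPoch (-q) q (l.1 k))⁻¹ * (pochK q q (k + 1) l)⁻¹)

lemma ww_step (q : ℂ) (k n : ℕ) (r : ℕ) (hr : r ≤ n) (μ : EE (k + 1) r) :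
    ww q (k + 1) (consP (k + 1) n μ.1 (by have := μ.2; omega))
      = q ^ (r ^ 2 + r) * R q ((n : ℤ) - r) * ww q k μ.1 := by
  rcases μ with ⟨μ, hμ⟩
  subst hμ
  have e : ((n : ℤ) - (μ.1 0 : ℕ)) = ((n - μ.1 0 : ℕ) : ℤ) := by omega
  rw [e, R_nat]
  simp only [ww, pochK, consP]
  rw [Finset.sum_range_succ', Finset.prod_range_succ' _ (k + 1)]
  simp only [pow_add, mul_inv]
  change _ * ((qPoch (-q) q (μ.1 k))⁻¹ * (_ * (qPoch q q (n - μ.1 0))⁻¹)) = _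
  ring

lemma sum_step {A : Type*} [AddCommMonoid A] (k n : ℕ) (f : EE (k + 2) n → A) :
    ∑ l, f l = ∑ r : Fin (n + 1), ∑ μ : EE (k + 1) r, f ((stepEquiv (k + 1) n).symm ⟨r, μ⟩) := by
  rw [← Fintype.sum_sigma', ← (stepEquiv (k + 1) n).symm.sum_comp]

lemma fiber_sum {q : ℂ} (hq : ‖q‖ < 1) (k : ℕ) : ∀ n,
    ∑ l : EE (k + 1) n, ww q k l.1 = bet q (alp q k) n := by
  induction k with
  | zero =>
    intro n
    rw [base_pair hq, ← (oneEquiv n).symm.sum_comp]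
    simp [oneEquiv, ww, pochK, consP, R_nat]
  | succ k ih =>
    intro n
    rw [sum_step]
    have : ∀ r : Fin (n + 1), ∑ μ : EE (k + 1) r,
        ww q (k + 1) ((stepEquiv (k + 1) n).symm ⟨r, μ⟩).1
        = q ^ ((r : ℕ) ^ 2 + (r : ℕ)) * R q ((n : ℤ) - (r : ℕ)) * bet q (alp q k) r := by
      intro r
      rw [← ih, Finset.mul_sum]
      exact Finset.sum_congr rfl fun μ _ => ww_step q k n r (by omega) μ
    rw [Finset.sum_congr rfl fun r _ => this r,
      Fin.sum_univ_eq_sum_range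
        (fun r : ℕ => q ^ (r ^ 2 + r) * R q ((n : ℤ) - r) * bet q (alp q k) r),
      bailey1 hq]
    rfl

lemma fiber_norm {q : ℂ} (hq : ‖q‖ < 1) (k : ℕ) : ∃ D : ℝ, 0 ≤ D ∧ ∀ n,
    ∑ l : EE (k + 1) n, ‖ww q k l.1‖ ≤ D * ((n : ℝ) + 1) ^ k := by
  obtain ⟨C, h0, hC⟩ := R_bdd hq
  induction k with
  | zero =>
    obtain ⟨C', h0', hC'⟩ :=
      bdd_of_tendsto ((tendsto_qPoch hq (-q)).inv₀ (qPochInf_neg_ne hq))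
    refine ⟨C' * C, by positivity, fun n => ?_⟩
    rw [← (oneEquiv n).symm.sum_comp]
    have h1 := hC n
    have h2 := hC' n
    rw [R_nat] at h1
    simp [oneEquiv, ww, pochK, consP] at h1 h2 ⊢
    exact mul_le_mul h2 h1 (by positivity) h0'.le
  | succ k ih =>
    obtain ⟨D, hD, ih⟩ := ih
    refine ⟨C * D, by positivity, fun n => ?_⟩
    rw [sum_step]
    have : ∀ r : Fin (n + 1), ∑ μ : EE (k + 1) r,
        ‖ww q (k + 1) ((stepEquiv (k + 1) n).symm ⟨r, μ⟩).1‖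
        ≤ C * D * ((n : ℝ) + 1) ^ k := by
      intro r
      calc _ ≤ ∑ μ : EE (k + 1) r, C * ‖ww q k μ.1‖ := by
            refine Finset.sum_le_sum fun μ _ => ?_
            have e : ww q (k + 1) ((stepEquiv (k + 1) n).symm ⟨r, μ⟩).1 = _ :=
              ww_step q k n r (by omega) μ
            rw [e, norm_mul, norm_mul, norm_pow]
            refine mul_le_mul_of_nonneg_right ?_ (norm_nonneg _)
            exact (mul_le_of_le_one_left (norm_nonneg _)
              (pow_le_one₀ (norm_nonneg _) hq.le)).trans (hC _)
        _ = C * ∑ μ : EE (k + 1) r, ‖ww q k μ.1‖ := by rw [Finset.mul_sum]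
        _ ≤ C * (D * (((r : ℕ) : ℝ) + 1) ^ k) := by gcongr; exact ih r
        _ ≤ C * (D * ((n : ℝ) + 1) ^ k) := by
            have : ((r : ℕ) : ℝ) ≤ n := by exact_mod_cast (by omega : (r : ℕ) ≤ n)
            gcongr
        _ = _ := by ring
    refine (Finset.sum_le_sum fun r _ => this r).trans ?_
    simp
    apply le_of_eq
    ring

lemma summable_poly {ρ : ℝ} (h0 : 0 ≤ ρ) (h1 : ρ < 1) (k : ℕ) :
    Summable fun n : ℕ => ((n : ℝ) + 1) ^ k * ρ ^ n := by
  obtain ⟨σ, hσ, hσ1⟩ := exists_between h1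
  have hp : 0 < σ := h0.trans_lt hσ
  have := summable_pow_mul_geometric_of_norm_lt_one k (r := σ)
    (by rwa [Real.norm_of_nonneg hp.le])
  have := ((summable_nat_add_iff 1).mpr this).mul_right σ⁻¹
  refine Summable.of_nonneg_of_le (fun n => by positivity) (fun n => ?_) this
  push_cast
  rw [mul_assoc, pow_succ, mul_assoc, mul_inv_cancel₀ hp.ne', mul_one]
  gcongr

/-- the coefficient depending only on the largest part -/
noncomputable def uu (q : ℂ) (n : ℕ) : ℂ := q ^ ((n + 1).choose 2) * qPoch (-q) q n

lemma uu_bdd {q : ℂ} (hq : ‖q‖ < 1) : ∃ C, 0 < C ∧ ∀ n, ‖uu q n‖ ≤ C * ‖q‖ ^ n := by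
  obtain ⟨C, h0, hC⟩ := bdd_of_tendsto (tendsto_qPoch hq (-q))
  refine ⟨C, h0, fun n => ?_⟩
  rw [uu, norm_mul, norm_pow, mul_comm]
  refine mul_le_mul (hC n) (pow_le_pow_of_le_one (norm_nonneg _) hq.le ?_) (by positivity) h0.le
  rw [ch']; omega

lemma total {q : ℂ} (hq : ‖q‖ < 1) (k : ℕ) :
    (Summable fun n => ‖uu q n * bet q (alp q k) n‖) ∧
    ∑' l : PartK (k + 1), uu q (l.1 0) * ww q k l = ∑' n, uu q n * bet q (alp q k) n := by
  obtain ⟨D, hD, hb⟩ := fiber_norm hq k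
  obtain ⟨C, hC, hu⟩ := uu_bdd hq
  have hsum : Summable fun n : ℕ => ∑ l : EE (k + 1) n, ‖uu q n * ww q k l.1‖ := by
    refine Summable.of_nonneg_of_le (fun n => Finset.sum_nonneg fun _ _ => norm_nonneg _)
      (fun n => ?_) ((summable_poly (norm_nonneg q) hq k).mul_left (C * D))
    simp only [norm_mul, ← Finset.mul_sum]
    calc _ ≤ (C * ‖q‖ ^ n) * (D * ((n : ℝ) + 1) ^ k) := by
          refine mul_le_mul (hu n) (hb n) (Finset.sum_nonneg fun _ _ => norm_nonneg _) (by positivity)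
      _ = _ := by ring
  have hfib : ∀ n, ∑ l : EE (k + 1) n, uu q n * ww q k l.1 = uu q n * bet q (alp q k) n := by
    intro n
    rw [← Finset.mul_sum, fiber_sum hq]
  constructor
  · refine Summable.of_nonneg_of_le (fun n => norm_nonneg _) (fun n => ?_) hsum
    rw [← hfib]
    exact norm_sum_le _ _
  · rw [← (Equiv.sigmaFiberEquiv (fun l : PartK (k + 1) => l.1 0)).tsum_eq]
    have e : ∀ p : (Σ n : ℕ, EE (k + 1) n),
        uu q (((Equiv.sigmaFiberEquiv (fun l : PartK (k + 1) => l.1 0)) p).1 0) *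
          ww q k ((Equiv.sigmaFiberEquiv (fun l : PartK (k + 1) => l.1 0)) p)
        = uu q p.1 * ww q k p.2.1 := by
      rintro ⟨n, l, hl⟩
      subst hl
      rfl
    have hs : Summable fun p : (Σ n : ℕ, EE (k + 1) n) => uu q p.1 * ww q k p.2.1 := by
      apply Summable.of_norm
      rw [summable_sigma_of_nonneg (fun _ => norm_nonneg _)]
      refine ⟨fun n => (hasSum_fintype _).summable, ?_⟩
      simpa only [tsum_fintype] using hsum
    rw [tsum_congr e, hs.tsum_sigma]
    refine tsum_congr fun n => ?_
    rw [tsum_fintype, ← hfib]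

lemma alp_dd (q : ℂ) (k r : ℕ) : q ^ ((r + 1).choose 2) * alp q k r
    = dd q (q ^ (2 * (k + 1))) (q ^ (2 * (k + 1) + 1)) r := by
  have h2 : r ^ 2 = 2 * r.choose 2 + r := by
    induction r with
    | zero => rfl
    | succ r ih => rw [ch']; linarith
  have e : alp q k r = q ^ (k * (r ^ 2 + r)) *
      (q ^ ((r + 1).choose 2) * ((-1) ^ r * q ^ (r.choose 2) * (1 - q ^ (2 * r + 1)))) := by
    induction k with
    | zero => simp [alp]
    | succ k ih => simp only [alp]; rw [ih]; ring
  rw [e, dd, ch', h2, neg_pow, neg_pow q (r + 1)]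
  generalize r.choose 2 = x
  ring

lemma main {q : ℂ} (hq : ‖q‖ < 1) (k : ℕ) :
    ∑' l : PartK (k + 1), uu q (l.1 0) * ww q k l
      = qPochInf (-q) q / qPochInf q q *
          (qPochInf (q ^ (2 * (k + 1) + 1)) (q ^ (2 * (k + 1) + 1)) *
            qPochInf (q ^ (2 * (k + 1))) (q ^ (2 * (k + 1) + 1)) *
            qPochInf q (q ^ (2 * (k + 1) + 1))) := by
  obtain ⟨hs, ht⟩ := total hq k
  rw [ht]
  have hpow : ∀ m, ‖q ^ (m + 1)‖ < 1 := fun m => by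
    rw [norm_pow]; exact pow_lt_one₀ (norm_nonneg _) hq (by omega)
  have hQ : ‖q ^ (2 * (k + 1) + 1)‖ < 1 := hpow _
  have hw : ‖q ^ (2 * (k + 1))‖ < 1 := hpow (2 * k + 1)
  rw [← jtp hQ hq hw (by ring)]
  obtain ⟨C, h0, hC⟩ := R_bdd hq
  have l1 := lim_gen hs (g := fun M r => R q ((M : ℤ) - r)) (C := C) (a := (qPochInf q q)⁻¹)
    (fun M s => hC _) (fun s => (tendsto_R hq).comp (shift1 s))
  have l2 := (tendsto_qPoch hq (-q)).mul (bet_lim hq (dd_summable hQ hq hw))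
  have e : ∀ M : ℕ, ∑' r : ℕ, uu q r * bet q (alp q k) r * R q ((M : ℤ) - r)
      = qPoch (-q) q M *
        bet q (dd q (q ^ (2 * (k + 1))) (q ^ (2 * (k + 1) + 1))) M := by
    intro M
    rw [tsum_eq_sum (s := Finset.range (M + 1))]
    · have := bailey2 hq (alp q k) M
      simp only [alp_dd] at this
      rw [show dd q (q ^ (2 * (k + 1))) (q ^ (2 * (k + 1) + 1)) = fun r =>
        dd q (q ^ (2 * (k + 1))) (q ^ (2 * (k + 1) + 1)) r from rfl, ← this]
      refine Finset.sum_congr rfl fun r _ => ?_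
      rw [uu]; ring
    · intro r hr
      rw [R_neg q (j := (M : ℤ) - r) (by simp at hr; omega)]; simp
  have h4 := tendsto_nhds_unique (l1.congr e) l2
  have h5 := qPochInf_ne hq
  field_simp at h4 ⊢
  rw [h4]

lemma term_eq (k : ℕ) (q : ℂ) (lam : PartK (k + 1)) :
    q ^ (wtK (k + 1) lam + n2K (k + 1) lam - (lam.1 0 ^ 2 + lam.1 0) / 2) *
          qPoch (-q) q (lam.1 0) /
          (qPoch (-q) q (lam.1 (k + 1 - 1)) * pochK q q (k + 1) lam)
      = uu q (lam.1 0) * ww q k lam := by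
  have e : wtK (k + 1) lam + n2K (k + 1) lam - (lam.1 0 ^ 2 + lam.1 0) / 2
      = (lam.1 0 + 1).choose 2 + ∑ i ∈ Finset.range k, (lam.1 (i + 1) ^ 2 + lam.1 (i + 1)) := by
    rw [wtK, n2K, Finset.sum_range_succ', Finset.sum_range_succ', Finset.sum_add_distrib]
    generalize lam.1 0 = n
    have h2 : n ^ 2 + n = 2 * (n + 1).choose 2 := by
      induction n with
      | zero => rfl
      | succ r ih => rw [ch']; linarith
    omega
  rw [e, uu, ww, pow_add, div_eq_mul_inv, mul_inv, Nat.add_sub_cancel]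
  ring

end RR

/-- Identity (16): for `k ≥ 1`, `|q| < 1`,
`Σ_{l(λ)≤k} q^{|λ|+n_2(λ)-(λ_1^2+λ_1)/2} (-q;q)_{λ_1} / ((-q;q)_{λ_k} (q;q)_λ)
  = ((-q;q)_∞/(q;q)_∞) (q^{2k+1},q^{2k},q;q^{2k+1})_∞`. -/
theorem rr_type_16 (k : ℕ) (hk : 1 ≤ k) (q : ℂ) (hq : ‖q‖ < 1) :
    ∑' lam : PartK k,
        q ^ (wtK k lam + n2K k lam - (lam.1 0 ^ 2 + lam.1 0) / 2) *
          qPoch (-q) q (lam.1 0) /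
          (qPoch (-q) q (lam.1 (k - 1)) * pochK q q k lam)
      = qPochInf (-q) q / qPochInf q q *
          (qPochInf (q ^ (2 * k + 1)) (q ^ (2 * k + 1)) *
            qPochInf (q ^ (2 * k)) (q ^ (2 * k + 1)) *
            qPochInf q (q ^ (2 * k + 1))) := by
  obtain ⟨k, rfl⟩ : ∃ j, k = j + 1 := ⟨k - 1, by omega⟩
  rw [tsum_congr (RR.term_eq k q)]
  exact RR.main hq k
end
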